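/- arXiv:math/0511220 — 3 statements merged into one kernel-verified Lean document; each statement's English description precedes it below -/
import Mathlib

section
/- Let G be a finite group, ι an automorphism of G with ι² = id, and χ an irreducible complex character of G. Define the twisted Frobenius–Schur indicator ε_ι(χ) = (1/|G|) Σ_{g∈G} χ(g·ι(g)). Then Σ_{χ ∈ Irr(G)} ε_ι(χ)·χ(1) = |{g ∈ G : ι(g)^{−1} = g}|. -/
/-!
The regular character of `G` vanishes off the identity. By Maschke's theorem it is a linear
combination of irreducible characters, and by orthonormality the coefficient of `χ` is
`⟨reg, χ⟩ = χ 1`; hence `∑ χ, χ 1 * χ x = |G|` if `x = 1`, and `0` otherwise. Averaging this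
identity over the elements `x = g * ι g` counts the `g` with `g * ι g = 1`.
-/

universe u

section Lattice

theorem exists_isCompl_ne_top_of_not_isSimpleOrder {α : Type*} [Lattice α] [BoundedOrder α]
    [ComplementedLattice α] [Nontrivial α] (h : ¬IsSimpleOrder α) :
    ∃ a b : α, IsCompl a b ∧ a ≠ ⊤ ∧ b ≠ ⊤ := by
  obtain ⟨a, ha_bot, ha_top⟩ : ∃ a : α, a ≠ ⊥ ∧ a ≠ ⊤ := by
    by_contra! eq_top
    exact h ⟨fun a => or_iff_not_imp_left.2 (eq_top a)⟩
  obtain ⟨b, hab⟩ := exists_isCompl a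
  refine ⟨a, b, hab, ha_top, ?_⟩
  rintro rfl
  exact ha_bot (disjoint_top.1 hab.disjoint)

end Lattice

section LinearAlgebra

theorem trace_eq_add_trace_restrict {R M : Type*} [CommRing R] [AddCommGroup M] [Module R M]
    {p q : Submodule R M} [Module.Free R p] [Module.Finite R p] [Module.Free R q]
    [Module.Finite R q] (hpq : IsCompl p q) (f : M →ₗ[R] M) (hp : ∀ x ∈ p, f x ∈ p)
    (hq : ∀ x ∈ q, f x ∈ q) :
    LinearMap.trace R M f =
      LinearMap.trace R p (f.restrict hp) + LinearMap.trace R q (f.restrict hq) := by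
  have conj_eq :
      (p.prodEquivOfIsCompl q hpq).conj ((f.restrict hp).prodMap (f.restrict hq)) = f := by
    ext x
    obtain ⟨y, rfl⟩ := (p.prodEquivOfIsCompl q hpq).surjective x
    simp [LinearEquiv.conj_apply, Submodule.coe_prodEquivOfIsCompl']
  rw [← LinearMap.trace_prodMap', ← LinearMap.trace_conj' _ (p.prodEquivOfIsCompl q hpq), conj_eq]

theorem sum_bilin_smul_eq_of_mem_span {R M ι : Type*} [CommSemiring R] [AddCommMonoid M]
    [Module R M] [Fintype ι] [DecidableEq ι] {B : LinearMap.BilinForm R M} {v : ι → M}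
    (hv : ∀ i j, B (v i) (v j) = if i = j then 1 else 0) {x : M}
    (hx : x ∈ Submodule.span R (Set.range v)) :
    ∑ i, B x (v i) • v i = x := by
  obtain ⟨c, rfl⟩ := (Submodule.mem_span_range_iff_exists_fun R).1 hx
  simp [hv]

end LinearAlgebra

section Representation

theorem isCompl_toSubmodule {A G W : Type*} [Semiring A] [Monoid G] [AddCommMonoid W] [Module A W]
    {ρ : Representation A G W} {σ τ : Subrepresentation ρ} (h : IsCompl σ τ) :
    IsCompl σ.toSubmodule τ.toSubmodule :=
  .of_eq (congrArg Subrepresentation.toSubmodule h.inf_eq_bot)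
    (congrArg Subrepresentation.toSubmodule h.sup_eq_top)

theorem nontrivial_subrepresentation {A G W : Type*} [Semiring A] [Monoid G] [AddCommMonoid W]
    [Module A W] [Nontrivial W] (ρ : Representation A G W) : Nontrivial (Subrepresentation ρ) :=
  ⟨⊥, ⊤, fun h => bot_ne_top (α := Submodule A W) (congrArg Subrepresentation.toSubmodule h)⟩

variable {k G V : Type*} [Field k] [AddCommGroup V] [Module k V]

theorem character_eq_add_of_isCompl [Monoid G] [FiniteDimensional k V]
    {ρ : Representation k G V} {σ τ : Subrepresentation ρ} (h : IsCompl σ τ) :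
    ρ.character = σ.toRepresentation.character + τ.toRepresentation.character :=
  funext fun g => trace_eq_add_trace_restrict (isCompl_toSubmodule h) (ρ g)
    (σ.apply_mem_toSubmodule g) (τ.apply_mem_toSubmodule g)

theorem finrank_toSubmodule_lt [Monoid G] [FiniteDimensional k V] {ρ : Representation k G V}
    {σ : Subrepresentation ρ} (h : σ ≠ ⊤) :
    Module.finrank k σ.toSubmodule < Module.finrank k V :=
  Submodule.finrank_lt fun h_top => h (Subrepresentation.toSubmodule_injective h_top)

theorem character_leftRegular [Group G] [Fintype G] [DecidableEq G] (g : G) :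
    (Representation.leftRegular k G).character g = if g = 1 then (Fintype.card G : k) else 0 := by
  rw [Representation.character, LinearMap.trace_eq_matrix_trace k (MonoidAlgebra.basis G k),
    Matrix.trace]
  simp [LinearMap.toMatrix_apply, MonoidAlgebra.basis, Finsupp.single_apply]

end Representation

section IrreducibleCharacters

/-- The set `Irr(G)` of characters of irreducible representations of `G` over `k`, encoded as
functions so that isomorphic representations give the same element. -/
def irreducibleCharacters (k G : Type u) [Field k] [Group G] : Set (G → k) :=
  {f : G → k | ∃ V : FDRep k G, CategoryTheory.Simple V ∧ f = V.character}

/-- The pairing `⟨f, φ⟩ = |G|⁻¹ ∑ g, f g * φ g⁻¹`, for which irreducible characters are orthonormal.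
The inverse replaces complex conjugation, so that the pairing is bilinear over any field. -/
noncomputable def characterPairing (k G : Type*) [Field k] [Group G] [Fintype G] :
    LinearMap.BilinForm k (G → k) :=
  (Nat.card G : k)⁻¹ • ∑ g : G,
    LinearMap.BilinForm.linMulLin (LinearMap.proj g) (LinearMap.proj g⁻¹)

theorem characterPairing_apply {k G : Type*} [Field k] [Group G] [Fintype G] (f φ : G → k) :
    characterPairing k G f φ = (Nat.card G : k)⁻¹ * ∑ g : G, f g * φ g⁻¹ := by
  simp [characterPairing, LinearMap.sum_apply]

theorem characterPairing_leftRegular {k G : Type*} [Field k] [Group G] [Fintype G]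
    [NeZero (Nat.card G : k)] (φ : G → k) :
    characterPairing k G (Representation.leftRegular k G).character φ = φ 1 := by
  classical
  have card_ne_zero : (Fintype.card G : k) ≠ 0 := by
    simpa using NeZero.ne (Nat.card G : k)
  simp [characterPairing_apply, character_leftRegular, card_ne_zero]

variable {k G : Type u} [Field k] [IsAlgClosed k] [Group G] [NeZero (Nat.card G : k)]

theorem simple_of_isIrreducible [Finite G] {V : Type u} [AddCommGroup V] [Module k V]
    [FiniteDimensional k V] (ρ : Representation k G V) [ρ.IsIrreducible] :
    CategoryTheory.Simple (FDRep.of ρ) := by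
  rw [FDRep.simple_iff_end_is_rank_one,
    ← (Representation.linHom.invariantsEquivFDRepHom (FDRep.of ρ) (FDRep.of ρ)).finrank_eq]
  exact (Representation.invariantsEquivIntertwiningMap ρ ρ).finrank_eq.trans
    (Representation.IsIrreducible.finrank_intertwiningMap_self ρ)

theorem character_mem_span_irreducibleCharacters [Finite G] {V : Type u} [AddCommGroup V]
    [Module k V] [FiniteDimensional k V] (ρ : Representation k G V) :
    ρ.character ∈ Submodule.span k (irreducibleCharacters k G) := by
  induction hn : Module.finrank k V using Nat.strong_induction_on generalizing V with
  | _ n ih =>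
  subst hn
  by_cases hρ : ρ.IsIrreducible
  · exact Submodule.subset_span ⟨FDRep.of ρ, simple_of_isIrreducible ρ, rfl⟩
  rcases subsingleton_or_nontrivial V with _ | _
  · have character_eq_zero : ρ.character = 0 := funext fun g => by
      rw [Representation.character, Subsingleton.elim (ρ g) 0, map_zero, Pi.zero_apply]
    exact character_eq_zero ▸ zero_mem _
  · have := nontrivial_subrepresentation ρ
    obtain ⟨σ, τ, hστ, hσ, hτ⟩ := exists_isCompl_ne_top_of_not_isSimpleOrder hρ
    rw [character_eq_add_of_isCompl hστ]
    exact add_mem (ih _ (finrank_toSubmodule_lt hσ) σ.toRepresentation rfl)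
      (ih _ (finrank_toSubmodule_lt hτ) τ.toRepresentation rfl)

open scoped Classical in
theorem characterPairing_irreducibleCharacters [Fintype G] (χ ψ : irreducibleCharacters k G) :
    characterPairing k G χ ψ = if χ = ψ then 1 else 0 := by
  obtain ⟨V, _, hV⟩ := χ.2
  obtain ⟨W, _, hW⟩ := ψ.2
  have := invertibleOfNonzero (NeZero.ne (Nat.card G : k))
  split_ifs with h
  · rw [h, characterPairing_apply, hW, FDRep.char_orthonormal W W,
      if_pos ⟨CategoryTheory.Iso.refl W⟩]
  · have not_iso : ¬Nonempty (V ≅ W) := fun ⟨i⟩ =>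
      h (Subtype.ext (hV.trans ((FDRep.char_iso i).trans hW.symm)))
    rw [characterPairing_apply, hV, hW, FDRep.char_orthonormal V W, if_neg not_iso]

theorem linearIndependent_irreducibleCharacters [Finite G] :
    LinearIndependent k ((↑) : irreducibleCharacters k G → G → k) := by
  cases nonempty_fintype G
  refine LinearMap.linearIndependent_of_isOrthoᵢ (B := characterPairing k G) ?_ fun χ => ?_
  · exact LinearMap.isOrthoᵢ_def.2 fun χ ψ h => by
      rw [characterPairing_irreducibleCharacters, if_neg h]
  · simp [characterPairing_irreducibleCharacters]

theorem finite_irreducibleCharacters [Finite G] : (irreducibleCharacters k G).Finite :=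
  linearIndependent_irreducibleCharacters.setFinite

theorem finsum_irreducibleCharacters_apply_one_mul_apply [Fintype G] [DecidableEq G] (x : G) :
    ∑ᶠ χ ∈ irreducibleCharacters k G, χ 1 * χ x = if x = 1 then (Fintype.card G : k) else 0 := by
  classical
  have := (finite_irreducibleCharacters (k := k) (G := G)).fintype
  have expand_regular := sum_bilin_smul_eq_of_mem_span characterPairing_irreducibleCharacters
    (by simpa using character_mem_span_irreducibleCharacters (Representation.leftRegular k G))
  rw [← finsum_set_coe_eq_finsum_mem, finsum_eq_sum_of_fintype, ← character_leftRegular,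
    ← expand_regular]
  simp [characterPairing_leftRegular]

end IrreducibleCharacters

theorem twisted_frobenius_schur_sum_general (k G : Type u) [Field k] [IsAlgClosed k] [Group G]
    [Fintype G] [NeZero (Nat.card G : k)] (ι : G → G) :
    ∑ᶠ χ ∈ irreducibleCharacters k G,
        ((1 / (Fintype.card G : k)) * ∑ g : G, χ (g * ι g)) * χ 1
      = (Nat.card {g : G // (ι g)⁻¹ = g} : k) := by
  classical
  have card_ne_zero : (Fintype.card G : k) ≠ 0 := by simpa using NeZero.ne (Nat.card G : k)
  calc
    _ = (1 / (Fintype.card G : k)) *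
          ∑ g : G, ∑ᶠ χ ∈ irreducibleCharacters k G, χ 1 * χ (g * ι g) := by
      simp only [finsum_mem_eq_finite_toFinset_sum _ finite_irreducibleCharacters]
      rw [Finset.sum_comm, Finset.mul_sum]
      refine Finset.sum_congr rfl fun χ _ => ?_
      rw [← Finset.mul_sum, mul_assoc, mul_comm (χ 1)]
    _ = (1 / (Fintype.card G : k)) *
          ∑ g : G, if (ι g)⁻¹ = g then (Fintype.card G : k) else 0 := by
      simp only [finsum_irreducibleCharacters_apply_one_mul_apply, mul_eq_one_iff_eq_inv, eq_comm]
    _ = (Nat.card {g : G // (ι g)⁻¹ = g} : k) := by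
      rw [← Finset.sum_filter, Finset.sum_const, nsmul_eq_mul, Nat.card_eq_fintype_card,
        Fintype.card_subtype]
      field_simp

/-- Twisted Frobenius–Schur involution formula: for a finite group `G`, an order-2
automorphism `ι` of `G`, and with `ε_ι(χ) = (1/|G|)Σ_g χ(g·ι(g))` the twisted
Frobenius–Schur indicator, `Σ_{χ ∈ Irr(G)} ε_ι(χ)·χ(1) = #{g ∈ G : ι(g)⁻¹ = g}`. -/
theorem twisted_frobenius_schur_sum (G : Type) [Group G] [Fintype G]
    (ι : G ≃* G) (hι : ∀ g, ι (ι g) = g) :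
    ∑ᶠ χ ∈ {f : G → ℂ | ∃ V : FDRep ℂ G, CategoryTheory.Simple V ∧ f = V.character},
        ((1 / (Fintype.card G : ℂ)) * ∑ g : G, χ (g * ι g)) * χ 1
      = (Nat.card {g : G // (ι g)⁻¹ = g} : ℂ) :=
  twisted_frobenius_schur_sum_general ℂ G ι
end

section
/- Let q be an odd prime power and n odd. The two orthogonal groups O(n, F_q) associated to the two equivalence classes of nondegenerate quadratic forms on F_q^n are isomorphic and each has order 2·q^{(n−1)²/4}·Π_{i=1}^{(n−1)/2} (q^{2i} − 1). -/
/-!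
Fix a primitive additive character `ψ` of `F` and let `G(Q) = ∑ ψ (Q v)`. The dimension and the
Gauss sum `G(Q)` determine how often `Q` takes each nonzero value. Since `Q` splits as `c x²` plus
its restriction to `v^⊥` when `Q v = c ≠ 0`, they also determine `G` of that restriction.

If `G(Q₁) = G(Q₂)` and `Q₁ v ≠ 0`, then the isometries `Q₁ → Q₂` fibre over the vectors `w` with
`Q₂ w = Q₁ v`, and the fibre over `w` consists of the isometries `v^⊥ → w^⊥`. Splitting off two
vectors goes from dimension `2 m + 3` to `2 m + 1`. With `G'` the Gauss sum of `v^⊥`, it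
contributes the factor `(q^(2 m + 2) + G') (q^(2 m + 2) - G') / q`, which equals
`q^(2 m + 1) (q^(2 m + 2) - 1)` because `G'² = q^(2 m + 2)`. This yields the order, and as the
number of isometries is positive, forms of the same odd dimension with equal Gauss sums are
isometric.

In odd dimension `G(Q)` is determined up to sign and scaling `Q` by a nonsquare flips the sign, so
any two nondegenerate forms become isometric after scaling one of them, which does not change its
orthogonal group.
-/

section PerpendicularSplitting

open QuadraticMap hiding sq

variable {F V V₁ V₂ : Type*} [Field F] [AddCommGroup V] [Module F V]
  [AddCommGroup V₁] [Module F V₁] [AddCommGroup V₂] [Module F V₂]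

/-- The orthogonal complement `v^⊥` of a vector with respect to the polar form of `Q`. -/
def polarPerp (Q : QuadraticForm F V) (v : V) : Submodule F V :=
  LinearMap.BilinForm.orthogonal Q.polarBilin (F ∙ v)

/-- The restriction of `Q` to `v^⊥`. -/
abbrev perpForm (Q : QuadraticForm F V) (v : V) : QuadraticForm F (polarPerp Q v) :=
  Q.restrict (polarPerp Q v)

theorem mem_polarPerp {Q : QuadraticForm F V} {v w : V} :
    w ∈ polarPerp Q v ↔ polar Q v w = 0 := by
  rw [polarPerp, LinearMap.BilinForm.orthogonal_span_singleton_eq_toLin_ker]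
  rfl

theorem polar_self_ne_zero (hF : ringChar F ≠ 2) {Q : QuadraticForm F V} {v : V} (hv : Q v ≠ 0) :
    polar Q v v ≠ 0 := by
  rw [polar_self, nsmul_eq_mul, Nat.cast_ofNat]
  exact mul_ne_zero (Ring.two_ne_zero hF) hv

theorem isCompl_span_polarPerp (hF : ringChar F ≠ 2) {Q : QuadraticForm F V} {v : V}
    (hv : Q v ≠ 0) : IsCompl (F ∙ v) (polarPerp Q v) :=
  LinearMap.BilinForm.isCompl_span_singleton_orthogonal (polar_self_ne_zero hF hv)

theorem finrank_polarPerp_add_one (hF : ringChar F ≠ 2) [FiniteDimensional F V]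
    {Q : QuadraticForm F V} {v : V} (hv : Q v ≠ 0) :
    Module.finrank F (polarPerp Q v) + 1 = Module.finrank F V := by
  rw [← Submodule.finrank_add_eq_of_isCompl (isCompl_span_polarPerp hF hv),
    finrank_span_singleton (ne_zero_of_map hv), add_comm]

theorem finrank_polarPerp_perpForm_add_two (hF : ringChar F ≠ 2) [FiniteDimensional F V]
    {Q : QuadraticForm F V} {v : V} (hv : Q v ≠ 0) {w : polarPerp Q v} (hw : perpForm Q v w ≠ 0) :
    Module.finrank F (polarPerp (perpForm Q v) w) + 2 = Module.finrank F V := by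
  rw [← finrank_polarPerp_add_one hF hv, ← finrank_polarPerp_add_one hF hw]

theorem nondegenerate_perpForm (hF : ringChar F ≠ 2) {Q : QuadraticForm F V}
    (hQ : Q.polarBilin.Nondegenerate) {v : V} (hv : Q v ≠ 0) :
    (perpForm Q v).polarBilin.Nondegenerate :=
  LinearMap.BilinForm.restrict_nondegenerate_orthogonal_spanSingleton Q.polarBilin hQ
    (fun x y h ↦ (polar_comm Q y x).trans h) (polar_self_ne_zero hF hv)

theorem exists_ne_zero_of_nondegenerate [Nontrivial V] {Q : QuadraticForm F V}
    (hQ : Q.polarBilin.Nondegenerate) : ∃ v, Q v ≠ 0 := by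
  by_contra! h
  obtain ⟨v, hv⟩ := exists_ne (0 : V)
  exact hv (hQ.1 v fun w ↦ by simp [polar, h])

theorem nondegenerate_polarBilin_smul {Q : QuadraticForm F V} (hQ : Q.polarBilin.Nondegenerate)
    {c : F} (hc : c ≠ 0) : (c • Q).polarBilin.Nondegenerate := by
  have hpolar (x y : V) : (c • Q).polarBilin x y = 0 ↔ Q.polarBilin x y = 0 := by
    simp only [polarBilin_apply_apply, FunLike.coe_smul, polar_smul, smul_eq_zero, hc, false_or]
  exact ⟨fun x hx ↦ hQ.1 x fun y ↦ (hpolar x y).1 (hx y),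
    fun y hy ↦ hQ.2 y fun x ↦ (hpolar x y).1 (hy x)⟩

/-- The orthogonal splitting of `V` as the line through a vector `v` with `Q v = c ≠ 0`, on which
`Q` is `x ↦ c x²`, and the complement `v^⊥`. -/
noncomputable def perpSplit (hF : ringChar F ≠ 2) (Q : QuadraticForm F V) {v : V} {c : F}
    (hc : c ≠ 0) (hv : Q v = c) : ((c • QuadraticMap.sq).prod (perpForm Q v)).IsometryEquiv Q where
  toLinearEquiv :=
    ((LinearEquiv.toSpanNonzeroSingleton F V v (ne_zero_of_map (hv.trans_ne hc))).prodCongr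
      (.refl F _)).trans
      (Submodule.prodEquivOfIsCompl _ _ (isCompl_span_polarPerp hF (hv.trans_ne hc)))
  map_app' := by
    rintro ⟨x, w, hw⟩
    have hxw : polar Q (x • v) w = 0 := by rw [polar_smul_left, mem_polarPerp.1 hw, smul_zero]
    simp [QuadraticMap.map_add Q, hxw, QuadraticMap.map_smul, hv, mul_comm]

@[simp]
theorem perpSplit_apply (hF : ringChar F ≠ 2) (Q : QuadraticForm F V) {v : V} {c : F}
    (hc : c ≠ 0) (hv : Q v = c) (p : F × polarPerp Q v) :
    perpSplit hF Q hc hv p = p.1 • v + p.2 :=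
  rfl

variable {Q₁ : QuadraticForm F V₁} {Q₂ : QuadraticForm F V₂}

theorem polar_isometryEquiv (f : Q₁.IsometryEquiv Q₂) (x y : V₁) :
    polar Q₂ (f x) (f y) = polar Q₁ x y := by
  simp only [polar, ← map_add, IsometryEquiv.map_app]

/-- The restriction of an isometry with `f v = w` to an isometry `v^⊥ → w^⊥`. -/
def perpRestrict (f : Q₁.IsometryEquiv Q₂) {v : V₁} {w : V₂} (h : f v = w) :
    (perpForm Q₁ v).IsometryEquiv (perpForm Q₂ w) where
  toLinearEquiv := f.toLinearEquiv.ofSubmodules (polarPerp Q₁ v) (polarPerp Q₂ w) <| by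
    ext y
    rw [Submodule.mem_map_equiv, mem_polarPerp, mem_polarPerp, ← polar_isometryEquiv f, h]
    exact Eq.congr_left (congrArg (polar Q₂ w) (f.apply_symm_apply y))
  map_app' u := f.map_app u

@[simp]
theorem coe_perpRestrict_apply (f : Q₁.IsometryEquiv Q₂) {v : V₁} {w : V₂} (h : f v = w)
    (u : polarPerp Q₁ v) : (perpRestrict f h u : V₂) = f u :=
  rfl

theorem perpSplit_one_zero (hF : ringChar F ≠ 2) (Q : QuadraticForm F V) {v : V} {c : F}
    (hc : c ≠ 0) (hv : Q v = c) : perpSplit hF Q hc hv (1, 0) = v := by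
  simp only [perpSplit_apply, one_smul, ZeroMemClass.coe_zero, add_zero]

theorem perpSplit_zero_mk (hF : ringChar F ≠ 2) (Q : QuadraticForm F V) {v : V} {c : F}
    (hc : c ≠ 0) (hv : Q v = c) (u : polarPerp Q v) : perpSplit hF Q hc hv (0, u) = u := by
  simp only [perpSplit_apply, zero_smul, zero_add]

/-- The isometry `x v + u ↦ x w + g u` that extends an isometry `g : v^⊥ → w^⊥`. -/
noncomputable def perpExtend (hF : ringChar F ≠ 2) {v : V₁} {w : V₂} (hv : Q₁ v ≠ 0)
    (hw : Q₂ w = Q₁ v) (g : (perpForm Q₁ v).IsometryEquiv (perpForm Q₂ w)) :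
    Q₁.IsometryEquiv Q₂ :=
  (perpSplit hF Q₁ hv rfl).symm.trans
    (((QuadraticMap.IsometryEquiv.refl _).prod g).trans (perpSplit hF Q₂ hv hw))

theorem perpExtend_perpSplit (hF : ringChar F ≠ 2) {v : V₁} {w : V₂} (hv : Q₁ v ≠ 0)
    (hw : Q₂ w = Q₁ v) (g : (perpForm Q₁ v).IsometryEquiv (perpForm Q₂ w))
    (p : F × polarPerp Q₁ v) :
    perpExtend hF hv hw g (perpSplit hF Q₁ hv rfl p) = perpSplit hF Q₂ hv hw (p.1, g p.2) :=
  congrArg (fun r : F × polarPerp Q₁ v ↦ perpSplit hF Q₂ hv hw (r.1, g r.2))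
    ((perpSplit hF Q₁ hv rfl).symm_apply_apply p)

/-- Isometries `Q₁ → Q₂` that send `v` to `w` are the same as isometries `v^⊥ → w^⊥`. -/
noncomputable def isometryFiberEquiv (hF : ringChar F ≠ 2) {v : V₁} {w : V₂} (hv : Q₁ v ≠ 0)
    (hw : Q₂ w = Q₁ v) :
    {f : Q₁.IsometryEquiv Q₂ // f v = w} ≃ (perpForm Q₁ v).IsometryEquiv (perpForm Q₂ w) where
  toFun f := perpRestrict f.1 f.2
  invFun g := ⟨perpExtend hF hv hw g, by
    simpa only [perpSplit_one_zero, map_zero] using perpExtend_perpSplit hF hv hw g (1, 0)⟩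
  left_inv := by
    rintro ⟨f, hf⟩
    refine Subtype.ext (DFunLike.ext _ _ fun u ↦ ?_)
    obtain ⟨p, rfl⟩ := EquivLike.surjective (perpSplit hF Q₁ hv rfl) u
    rw [perpExtend_perpSplit]
    simp only [perpSplit_apply, coe_perpRestrict_apply, map_add, map_smul, hf]
  right_inv g := by
    refine DFunLike.ext _ _ fun u ↦ Subtype.ext ?_
    simpa only [coe_perpRestrict_apply, perpSplit_zero_mk]
      using perpExtend_perpSplit hF hv hw g (0, u)

end PerpendicularSplitting

section QuadraticGaussSums

variable {F E : Type*} [Field F]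

theorem isPrimitive_mulShift {R M : Type*} [CommRing R] [NoZeroDivisors R] [CommMonoid M]
    {ψ : AddChar R M} (hψ : ψ.IsPrimitive) {a : R} (ha : a ≠ 0) : (ψ.mulShift a).IsPrimitive := by
  intro b hb
  rw [AddChar.mulShift_mulShift]
  exact hψ (mul_ne_zero ha hb)

theorem card_mul_natCard_fiber [Fintype F] {α : Type*} [Finite α] [CommRing E] [IsDomain E]
    {ψ : AddChar F E} (hψ : ψ.IsPrimitive) (f : α → F) (b : F) :
    Fintype.card F * (Nat.card {x // f x = b} : E) = ∑ t, ψ (t * -b) * ∑ᶠ x, ψ (t * f x) := by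
  classical
  have := Fintype.ofFinite α
  calc Fintype.card F * (Nat.card {x // f x = b} : E)
      = ∑ x, if f x = b then (Fintype.card F : E) else 0 := by
        rw [Nat.card_eq_fintype_card, Fintype.card_subtype, ← Finset.sum_filter, Finset.sum_const,
          nsmul_eq_mul, mul_comm]
    _ = ∑ x, ∑ t, ψ (t * (f x - b)) := Finset.sum_congr rfl fun x _ ↦ by
        rw [AddChar.sum_mulShift _ hψ, Nat.cast_ite, Nat.cast_zero]
        simp only [sub_eq_zero]
    _ = ∑ t, ψ (t * -b) * ∑ᶠ x, ψ (t * f x) := by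
        rw [Finset.sum_comm]
        refine Finset.sum_congr rfl fun t _ ↦ ?_
        rw [finsum_eq_sum_of_fintype, Finset.mul_sum]
        refine Finset.sum_congr rfl fun x _ ↦ ?_
        rw [← AddChar.map_add_eq_mul, ← mul_add, neg_add_eq_sub]

/-- The Gauss sum `∑ ψ (Q v)` of a quadratic form over a finite field. It is a `finsum`, so it has
the junk value `0` on an infinite space. -/
noncomputable def quadraticGaussSum [CommRing E] {V : Type*} [AddCommGroup V] [Module F V]
    (ψ : AddChar F E) (Q : QuadraticForm F V) : E :=
  ∑ᶠ v, ψ (Q v)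

section Functoriality

variable [CommRing E] {V V₁ V₂ : Type*} [AddCommGroup V] [Module F V] [AddCommGroup V₁]
  [Module F V₁] [AddCommGroup V₂] [Module F V₂] {Q : QuadraticForm F V} {Q₁ : QuadraticForm F V₁}
  {Q₂ : QuadraticForm F V₂}

theorem quadraticGaussSum_congr (ψ : AddChar F E) (e : Q₁.IsometryEquiv Q₂) :
    quadraticGaussSum ψ Q₁ = quadraticGaussSum ψ Q₂ := by
  rw [quadraticGaussSum, quadraticGaussSum, ← finsum_comp_equiv e.toLinearEquiv.toEquiv]
  exact finsum_congr fun v ↦ congrArg ψ (e.map_app v).symm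

theorem quadraticGaussSum_prod [Finite V₁] [Finite V₂] (ψ : AddChar F E)
    (Q₁ : QuadraticForm F V₁) (Q₂ : QuadraticForm F V₂) :
    quadraticGaussSum ψ (Q₁.prod Q₂) = quadraticGaussSum ψ Q₁ * quadraticGaussSum ψ Q₂ := by
  have := Fintype.ofFinite V₁
  have := Fintype.ofFinite V₂
  simp only [quadraticGaussSum, finsum_eq_sum_of_fintype, QuadraticMap.prod_apply,
    AddChar.map_add_eq_mul, Fintype.sum_prod_type, Finset.sum_mul_sum]

theorem quadraticGaussSum_smul (ψ : AddChar F E) (c : F) (Q : QuadraticForm F V) :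
    quadraticGaussSum ψ (c • Q) = quadraticGaussSum (ψ.mulShift c) Q := by
  simp only [quadraticGaussSum, FunLike.coe_smul, Pi.smul_apply, smul_eq_mul,
    AddChar.mulShift_apply]

theorem quadraticGaussSum_of_subsingleton [Subsingleton V] (ψ : AddChar F E)
    (Q : QuadraticForm F V) : quadraticGaussSum ψ Q = 1 := by
  let _ : Unique V := uniqueOfSubsingleton 0
  rw [quadraticGaussSum, finsum_unique, Subsingleton.elim default (0 : V), QuadraticMap.map_zero,
    AddChar.map_zero_eq_one]

theorem quadraticGaussSum_weightedSumSquares [Finite F] {ι : Type*} [Fintype ι] (ψ : AddChar F E)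
    (w : ι → F) :
    quadraticGaussSum ψ (QuadraticMap.weightedSumSquares F w) =
      ∏ i, quadraticGaussSum ψ (w i • QuadraticMap.sq) := by
  classical
  have := Fintype.ofFinite F
  have map_sum (a : ι → F) : ψ (∑ i, a i) = ∏ i, ψ (a i) := map_sum ψ.toAddMonoidHom a _
  simp only [quadraticGaussSum, finsum_eq_sum_of_fintype, QuadraticMap.weightedSumSquares_apply,
    map_sum, Finset.prod_univ_sum, Fintype.piFinset_univ]
  rfl

end Functoriality

/-- The quadratic character of `F`, with values in `E`. -/
noncomputable abbrev quadraticMulChar (F E : Type*) [Field F] [Fintype F] [DecidableEq F]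
    [CommRing E] : MulChar F E :=
  (quadraticChar F).ringHomComp (Int.castRingHom E)

variable [Fintype F] [DecidableEq F]

theorem isQuadratic_quadraticMulChar [CommRing E] : (quadraticMulChar F E).IsQuadratic :=
  (quadraticChar_isQuadratic F).comp _

theorem quadraticMulChar_sq_eq_one [CommRing E] {a : F} (ha : a ≠ 0) :
    quadraticMulChar F E a ^ 2 = 1 := by
  rw [MulChar.ringHomComp_apply, ← map_pow, quadraticChar_sq_one ha, map_one]

theorem quadraticMulChar_ne_one [CommRing E] [CharZero E] (hF : ringChar F ≠ 2) :
    quadraticMulChar F E ≠ 1 :=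
  (MulChar.ringHomComp_ne_one_iff (RingHom.injective_int _)).2 (quadraticChar_ne_one hF)

theorem exists_quadraticMulChar_eq_neg_one [CommRing E] (hF : ringChar F ≠ 2) :
    ∃ c : F, c ≠ 0 ∧ quadraticMulChar F E c = -1 := by
  obtain ⟨c, hc⟩ := quadraticChar_exists_neg_one' hF
  exact ⟨c, c.ne_zero, by rw [MulChar.ringHomComp_apply, hc, map_neg, map_one]⟩

theorem gaussSum_quadraticMulChar_mulShift [CommRing E] (ψ : AddChar F E) {a : F} (ha : a ≠ 0) :
    gaussSum (quadraticMulChar F E) (ψ.mulShift a) =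
      quadraticMulChar F E a * gaussSum (quadraticMulChar F E) ψ := by
  simpa only [isQuadratic_quadraticMulChar.inv, Units.val_mk0]
    using gaussSum_mulShift_eq (quadraticMulChar F E) ψ (Units.mk0 a ha)

theorem sum_addChar_sq [CommRing E] [IsDomain E] (hF : ringChar F ≠ 2) {ψ : AddChar F E}
    (hψ : ψ ≠ 1) : ∑ x, ψ (x ^ 2) = gaussSum (quadraticMulChar F E) ψ := by
  have card_sqrts (y : F) :
      (({x | x ^ 2 = y} : Finset F).card : E) = quadraticMulChar F E y + 1 := by
    have h := quadraticChar_card_sqrts hF y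
    rw [Set.toFinset_ofPred] at h
    rw [← Int.cast_natCast, h, Int.cast_add, Int.cast_one]
    rfl
  calc ∑ x, ψ (x ^ 2) = ∑ y, ∑ x with x ^ 2 = y, ψ (x ^ 2) :=
        (Finset.sum_fiberwise Finset.univ (· ^ 2) _).symm
    _ = ∑ y, (quadraticMulChar F E y + 1) * ψ y := Finset.sum_congr rfl fun y _ ↦ by
        rw [Finset.sum_congr rfl fun x hx ↦ congrArg ψ (Finset.mem_filter.1 hx).2,
          Finset.sum_const, nsmul_eq_mul, card_sqrts]
    _ = gaussSum (quadraticMulChar F E) ψ := by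
        simp only [add_mul, one_mul, Finset.sum_add_distrib, AddChar.sum_eq_zero_of_ne_one hψ,
          add_zero, gaussSum]

theorem quadraticGaussSum_smul_sq [CommRing E] [IsDomain E] (hF : ringChar F ≠ 2)
    {ψ : AddChar F E} (hψ : ψ.IsPrimitive) {a : F} (ha : a ≠ 0) :
    quadraticGaussSum ψ (a • QuadraticMap.sq) =
      quadraticMulChar F E a * gaussSum (quadraticMulChar F E) ψ := by
  rw [quadraticGaussSum_smul, quadraticGaussSum, finsum_eq_sum_of_fintype,
    ← gaussSum_quadraticMulChar_mulShift ψ ha, ← sum_addChar_sq hF (hψ ha)]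
  simp only [QuadraticMap.sq_apply, sq]

end QuadraticGaussSums

section FormGaussSums

open QuadraticMap hiding sq

variable {F E V V₁ V₂ : Type*} [Field F] [AddCommGroup V] [Module F V]
  [AddCommGroup V₁] [Module F V₁] [AddCommGroup V₂] [Module F V₂]
  {Q : QuadraticForm F V} {Q₁ : QuadraticForm F V₁} {Q₂ : QuadraticForm F V₂}

theorem equivalent_weightedSumSquares_of_nondegenerate_polarBilin [FiniteDimensional F V]
    (hF : ringChar F ≠ 2) (hQ : Q.polarBilin.Nondegenerate) :
    ∃ w : Fin (Module.finrank F V) → Fˣ, Q.Equivalent (weightedSumSquares F fun i ↦ (w i : F)) := by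
  have := invertibleOfNonzero (Ring.two_ne_zero hF)
  exact QuadraticForm.equivalent_weightedSumSquares_units_of_nondegenerate' Q
    (nondegenerate_associated_iff.2 (nondegenerate_polar_iff.1 hQ)).1

variable [CommRing E] [IsDomain E] {ψ : AddChar F E}

section Fintype

variable [Fintype F]

theorem exists_quadraticGaussSum_eq_prod [DecidableEq F] [FiniteDimensional F V]
    (hF : ringChar F ≠ 2) (hQ : Q.polarBilin.Nondegenerate) :
    ∃ w : Fin (Module.finrank F V) → Fˣ, ∀ ψ : AddChar F E, ψ.IsPrimitive →
      quadraticGaussSum ψ Q =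
        (∏ i, quadraticMulChar F E (w i)) *
          gaussSum (quadraticMulChar F E) ψ ^ Module.finrank F V := by
  obtain ⟨w, ⟨e⟩⟩ := equivalent_weightedSumSquares_of_nondegenerate_polarBilin hF hQ
  refine ⟨w, fun ψ hψ ↦ ?_⟩
  rw [quadraticGaussSum_congr ψ e, quadraticGaussSum_weightedSumSquares]
  simp only [quadraticGaussSum_smul_sq hF hψ (w _).ne_zero, Finset.prod_mul_distrib,
    Finset.prod_const, Finset.card_univ, Fintype.card_fin]

theorem quadraticGaussSum_smul_of_nondegenerate [DecidableEq F] [FiniteDimensional F V]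
    (hF : ringChar F ≠ 2) (hψ : ψ.IsPrimitive) (hQ : Q.polarBilin.Nondegenerate) {c : F}
    (hc : c ≠ 0) :
    quadraticGaussSum ψ (c • Q) =
      quadraticMulChar F E c ^ Module.finrank F V * quadraticGaussSum ψ Q := by
  obtain ⟨w, hw⟩ := exists_quadraticGaussSum_eq_prod (E := E) hF hQ
  rw [quadraticGaussSum_smul, hw _ (isPrimitive_mulShift hψ hc), hw ψ hψ,
    gaussSum_quadraticMulChar_mulShift ψ hc, mul_pow]
  ring

theorem quadraticGaussSum_sq [DecidableEq F] [CharZero E] [FiniteDimensional F V]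
    (hF : ringChar F ≠ 2) (hψ : ψ.IsPrimitive) (hQ : Q.polarBilin.Nondegenerate) :
    quadraticGaussSum ψ Q ^ 2 =
      (quadraticMulChar F E (-1) * Fintype.card F) ^ Module.finrank F V := by
  obtain ⟨w, hw⟩ := exists_quadraticGaussSum_eq_prod (E := E) hF hQ
  rw [hw ψ hψ, mul_pow, ← Finset.prod_pow,
    Finset.prod_eq_one fun i _ ↦ quadraticMulChar_sq_eq_one (w i).ne_zero, one_mul, pow_right_comm,
    gaussSum_sq (quadraticMulChar_ne_one hF) isQuadratic_quadraticMulChar hψ]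

theorem quadraticGaussSum_sq_of_even [CharZero E] [FiniteDimensional F V]
    (hF : ringChar F ≠ 2) (hψ : ψ.IsPrimitive) (hQ : Q.polarBilin.Nondegenerate)
    (hV : Even (Module.finrank F V)) :
    quadraticGaussSum ψ Q ^ 2 = Fintype.card F ^ Module.finrank F V := by
  classical
  obtain ⟨k, hk⟩ := hV.exists_two_nsmul
  rw [quadraticGaussSum_sq hF hψ hQ, mul_pow, hk, smul_eq_mul, pow_mul,
    quadraticMulChar_sq_eq_one (neg_ne_zero.2 one_ne_zero), one_pow, one_mul]

theorem quadraticGaussSum_eq_mul_perpForm [DecidableEq F] [Finite V] (hF : ringChar F ≠ 2)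
    (hψ : ψ.IsPrimitive) {v : V} {c : F} (hc : c ≠ 0) (hv : Q v = c) :
    quadraticGaussSum ψ Q =
      quadraticMulChar F E c * gaussSum (quadraticMulChar F E) ψ *
        quadraticGaussSum ψ (perpForm Q v) := by
  rw [← quadraticGaussSum_congr ψ (perpSplit hF Q hc hv), quadraticGaussSum_prod,
    quadraticGaussSum_smul_sq hF hψ hc]

theorem card_mul_natCard_level [DecidableEq F] [Finite V] (hF : ringChar F ≠ 2)
    (hψ : ψ.IsPrimitive) (hQ : Q.polarBilin.Nondegenerate) (b : F) :
    Fintype.card F * (Nat.card {v // Q v = b} : E) =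
      Fintype.card F ^ Module.finrank F V +
        gaussSum (quadraticMulChar F E ^ Module.finrank F V) (ψ.mulShift (-b)) *
          quadraticGaussSum ψ Q := by
  have fourier (t : F) : ∑ᶠ v, ψ (t * Q v) =
      (if t = 0 then (Fintype.card F : E) ^ Module.finrank F V else 0) +
        (quadraticMulChar F E ^ Module.finrank F V) t * quadraticGaussSum ψ Q := by
    obtain rfl | ht := eq_or_ne t 0
    · have := Fintype.ofFinite V
      simp only [zero_mul, AddChar.map_zero_eq_one, finsum_eq_sum_of_fintype, Finset.sum_const,
        Finset.card_univ, nsmul_one, Module.card_eq_pow_finrank (K := F) (V := V), Nat.cast_pow,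
        if_true, MulChar.map_zero, add_zero]
    · rw [if_neg ht, zero_add, ← Units.val_mk0 ht, MulChar.pow_apply_coe]
      exact quadraticGaussSum_smul_of_nondegenerate hF hψ hQ ht
  simp only [card_mul_natCard_fiber hψ, fourier, mul_add, Finset.sum_add_distrib, mul_ite,
    mul_zero, Finset.sum_ite_eq', Finset.mem_univ, if_true, zero_mul, AddChar.map_zero_eq_one,
    one_mul, gaussSum, Finset.sum_mul, AddChar.mulShift_apply]
  congr 1
  refine Finset.sum_congr rfl fun t _ ↦ ?_
  rw [mul_comm t, mul_left_comm, mul_assoc]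

theorem card_mul_natCard_level_of_even [CharZero E] [Finite V] (hF : ringChar F ≠ 2)
    (hψ : ψ.IsPrimitive) (hQ : Q.polarBilin.Nondegenerate) (hV : Even (Module.finrank F V)) {b : F}
    (hb : b ≠ 0) :
    Fintype.card F * (Nat.card {v // Q v = b} : E) =
      Fintype.card F ^ Module.finrank F V - quadraticGaussSum ψ Q := by
  classical
  rw [card_mul_natCard_level hF hψ hQ, isQuadratic_quadraticMulChar.pow_even hV,
    gaussSum_one_left (hψ (neg_ne_zero.2 hb)), neg_one_mul, sub_eq_add_neg]

theorem natCard_level_of_odd [CharZero E] [Finite V₁] [Finite V₂] (hF : ringChar F ≠ 2)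
    (hψ : ψ.IsPrimitive) (h₂ : Q₂.polarBilin.Nondegenerate)
    (hG : quadraticGaussSum ψ Q₁ = quadraticGaussSum ψ Q₂) {n : ℕ} (hn : Even n)
    (hV : Module.finrank F V₂ = n + 1) {v : V₁} (hv : Q₁ v ≠ 0) :
    (Nat.card {w // Q₂ w = Q₁ v} : E) =
      Fintype.card F ^ n + quadraticGaussSum ψ (perpForm Q₁ v) := by
  classical
  have hχ : quadraticMulChar F E (-Q₁ v) * quadraticMulChar F E (Q₁ v) =
      quadraticMulChar F E (-1) := by
    rw [neg_eq_neg_one_mul, map_mul, mul_assoc, ← sq, quadraticMulChar_sq_eq_one hv, mul_one]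
  have hg : quadraticMulChar F E (-1) * gaussSum (quadraticMulChar F E) ψ ^ 2 = Fintype.card F := by
    rw [gaussSum_sq (quadraticMulChar_ne_one hF) isQuadratic_quadraticMulChar hψ, ← mul_assoc,
      ← sq, quadraticMulChar_sq_eq_one (neg_ne_zero.2 one_ne_zero), one_mul]
  refine mul_left_cancel₀ (Nat.cast_ne_zero.2 Fintype.card_ne_zero : (Fintype.card F : E) ≠ 0) ?_
  rw [card_mul_natCard_level hF hψ h₂, hV, isQuadratic_quadraticMulChar.pow_odd hn.add_one,
    gaussSum_quadraticMulChar_mulShift ψ (neg_ne_zero.2 hv), ← hG,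
    quadraticGaussSum_eq_mul_perpForm hF hψ hv rfl]
  linear_combination gaussSum (quadraticMulChar F E) ψ ^ 2 *
    quadraticGaussSum ψ (perpForm Q₁ v) * hχ + quadraticGaussSum ψ (perpForm Q₁ v) * hg

end Fintype

theorem quadraticGaussSum_perpForm_congr [Finite F] [CharZero E] [Finite V₁] [Finite V₂]
    (hF : ringChar F ≠ 2) (hψ : ψ.IsPrimitive)
    (hG : quadraticGaussSum ψ Q₁ = quadraticGaussSum ψ Q₂) {v : V₁} {w : V₂} (hv : Q₁ v ≠ 0)
    (hw : Q₂ w = Q₁ v) :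
    quadraticGaussSum ψ (perpForm Q₁ v) = quadraticGaussSum ψ (perpForm Q₂ w) := by
  classical
  have := Fintype.ofFinite F
  rw [quadraticGaussSum_eq_mul_perpForm hF hψ hv rfl,
    quadraticGaussSum_eq_mul_perpForm hF hψ hv hw] at hG
  have hχ : quadraticMulChar F E (Q₁ v) ≠ 0 := fun h ↦ by
    simpa [h] using quadraticMulChar_sq_eq_one (E := E) hv
  have hg : gaussSum (quadraticMulChar F E) ψ ≠ 0 :=
    gaussSum_ne_zero_of_nontrivial (Nat.cast_ne_zero.2 Fintype.card_ne_zero)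
      (quadraticMulChar_ne_one hF) hψ
  exact mul_left_cancel₀ (mul_ne_zero hχ hg) hG

end FormGaussSums

section CountingIsometries

open QuadraticMap hiding sq

variable {F E V₁ V₂ : Type*} [Field F] [AddCommGroup V₁] [Module F V₁] [AddCommGroup V₂]
  [Module F V₂] {Q₁ : QuadraticForm F V₁} {Q₂ : QuadraticForm F V₂}

theorem natCard_isometryEquiv_eq_mul [Semiring E] [Finite V₁] [Finite V₂] (hF : ringChar F ≠ 2)
    {v : V₁} (hv : Q₁ v ≠ 0) {K : E}
    (hK : ∀ w, Q₂ w = Q₁ v →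
      (Nat.card ((perpForm Q₁ v).IsometryEquiv (perpForm Q₂ w)) : E) = K) :
    (Nat.card (Q₁.IsometryEquiv Q₂) : E) = Nat.card {w // Q₂ w = Q₁ v} * K := by
  have := Fintype.ofFinite {w // Q₂ w = Q₁ v}
  let image (f : Q₁.IsometryEquiv Q₂) : {w // Q₂ w = Q₁ v} := ⟨f v, f.map_app v⟩
  have hfiber (w : {w // Q₂ w = Q₁ v}) : (Nat.card {f // image f = w} : E) = K := by
    rw [← hK w w.2, ← Nat.card_congr (isometryFiberEquiv hF hv w.2)]
    exact congrArg _ (Nat.card_congr (Equiv.subtypeEquivRight fun f ↦ Subtype.ext_iff))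
  have := DFunLike.finite (Q₁.IsometryEquiv Q₂)
  rw [← Nat.card_congr (Equiv.sigmaFiberEquiv image), Nat.card_sigma, Nat.cast_sum,
    Finset.sum_congr rfl fun w _ ↦ hfiber w, Finset.sum_const, Finset.card_univ, nsmul_eq_mul,
    Nat.card_eq_fintype_card]

theorem natCard_isometryEquiv_of_subsingleton [Subsingleton V₁] [Subsingleton V₂] :
    Nat.card (Q₁.IsometryEquiv Q₂) = 1 := by
  have : Subsingleton (Q₁.IsometryEquiv Q₂) := DFunLike.subsingleton_cod
  have f : Q₁.IsometryEquiv Q₂ := ⟨0, fun v ↦ by simp [Subsingleton.elim v 0]⟩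
  exact Nat.card_eq_one_iff_unique.2 ⟨this, ⟨f⟩⟩

section Domain

variable [CommRing E] [IsDomain E] [CharZero E] {ψ : AddChar F E}

theorem natCard_isometryEquiv_eq_mul_of_odd [Fintype F] [Finite V₁] [Finite V₂]
    (hF : ringChar F ≠ 2) (hψ : ψ.IsPrimitive) (h₂ : Q₂.polarBilin.Nondegenerate)
    (hG : quadraticGaussSum ψ Q₁ = quadraticGaussSum ψ Q₂) {n : ℕ} (hn : Even n)
    (hV : Module.finrank F V₂ = n + 1) {v : V₁} (hv : Q₁ v ≠ 0) {K : E}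
    (hK : ∀ w, Q₂ w = Q₁ v →
      (Nat.card ((perpForm Q₁ v).IsometryEquiv (perpForm Q₂ w)) : E) = K) :
    (Nat.card (Q₁.IsometryEquiv Q₂) : E) =
      (Fintype.card F ^ n + quadraticGaussSum ψ (perpForm Q₁ v)) * K := by
  rw [natCard_isometryEquiv_eq_mul hF hv hK, natCard_level_of_odd hF hψ h₂ hG hn hV hv]

theorem card_mul_natCard_isometryEquiv_of_even [Fintype F] [Finite V₁] [Finite V₂] [Nontrivial V₁]
    (hF : ringChar F ≠ 2) (hψ : ψ.IsPrimitive) (h₁ : Q₁.polarBilin.Nondegenerate)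
    (h₂ : Q₂.polarBilin.Nondegenerate) (hV : Even (Module.finrank F V₂)) {K : E}
    (hK : ∀ v w, Q₁ v ≠ 0 → Q₂ w = Q₁ v →
      (Nat.card ((perpForm Q₁ v).IsometryEquiv (perpForm Q₂ w)) : E) = K) :
    Fintype.card F * (Nat.card (Q₁.IsometryEquiv Q₂) : E) =
      (Fintype.card F ^ Module.finrank F V₂ - quadraticGaussSum ψ Q₂) * K := by
  obtain ⟨v, hv⟩ := exists_ne_zero_of_nondegenerate h₁
  rw [natCard_isometryEquiv_eq_mul hF hv fun w ↦ hK v w hv, ← mul_assoc,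
    card_mul_natCard_level_of_even hF hψ h₂ hV hv]

theorem natCard_isometryEquiv_of_finrank_eq_one [Finite F] [Finite V₁] [Finite V₂]
    (hF : ringChar F ≠ 2) (hψ : ψ.IsPrimitive) (h₁ : Q₁.polarBilin.Nondegenerate)
    (h₂ : Q₂.polarBilin.Nondegenerate) (hG : quadraticGaussSum ψ Q₁ = quadraticGaussSum ψ Q₂)
    (hV₁ : Module.finrank F V₁ = 1) (hV₂ : Module.finrank F V₂ = 1) :
    (Nat.card (Q₁.IsometryEquiv Q₂) : E) = 2 := by
  have := Fintype.ofFinite F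
  have : Nontrivial V₁ := Module.nontrivial_of_finrank_eq_succ hV₁
  obtain ⟨v, hv⟩ := exists_ne_zero_of_nondegenerate h₁
  have hperp₁ := finrank_polarPerp_add_one hF hv
  have : Subsingleton (polarPerp Q₁ v) := Module.finrank_zero_iff (R := F).1 (by omega)
  have hK (w : V₂) (hw : Q₂ w = Q₁ v) :
      (Nat.card ((perpForm Q₁ v).IsometryEquiv (perpForm Q₂ w)) : E) = 1 := by
    have hperp₂ := finrank_polarPerp_add_one hF (hw.trans_ne hv)
    have : Subsingleton (polarPerp Q₂ w) := Module.finrank_zero_iff (R := F).1 (by omega)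
    rw [natCard_isometryEquiv_of_subsingleton, Nat.cast_one]
  rw [natCard_isometryEquiv_eq_mul_of_odd hF hψ h₂ hG Even.zero hV₂ hv hK,
    quadraticGaussSum_of_subsingleton, pow_zero, one_add_one_eq_two, mul_one]

end Domain

variable [Field E] [CharZero E] {ψ : AddChar F E}

theorem natCard_isometryEquiv_eq_mul_of_perp_perp [Fintype F] [Finite V₁] [Finite V₂]
    (hF : ringChar F ≠ 2) (hψ : ψ.IsPrimitive) (h₁ : Q₁.polarBilin.Nondegenerate)
    (h₂ : Q₂.polarBilin.Nondegenerate) (hG : quadraticGaussSum ψ Q₁ = quadraticGaussSum ψ Q₂)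
    {m : ℕ} (hV₁ : Module.finrank F V₁ = 2 * m + 3) (hV₂ : Module.finrank F V₂ = 2 * m + 3) {K : E}
    (hK : ∀ v w, Q₁ v ≠ 0 → Q₂ w = Q₁ v → ∀ v' w', perpForm Q₁ v v' ≠ 0 →
      perpForm Q₂ w w' = perpForm Q₁ v v' →
      (Nat.card ((perpForm (perpForm Q₁ v) v').IsometryEquiv (perpForm (perpForm Q₂ w) w')) : E) =
        K) :
    (Nat.card (Q₁.IsometryEquiv Q₂) : E) =
      Fintype.card F ^ (2 * m + 1) * (Fintype.card F ^ (2 * m + 2) - 1) * K := by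
  have : Nontrivial V₁ := Module.nontrivial_of_finrank_eq_succ hV₁
  obtain ⟨v, hv⟩ := exists_ne_zero_of_nondegenerate h₁
  have hdim : Even (2 * m + 2) := (even_two_mul m).add even_two
  have hperp₁ : Module.finrank F (polarPerp Q₁ v) = 2 * m + 2 :=
    Nat.succ_injective ((finrank_polarPerp_add_one hF hv).trans hV₁)
  have : Nontrivial (polarPerp Q₁ v) := Module.nontrivial_of_finrank_eq_succ hperp₁
  have hq : (Fintype.card F : E) ≠ 0 := Nat.cast_ne_zero.2 Fintype.card_ne_zero
  have hperp (w : V₂) (hw : Q₂ w = Q₁ v) :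
      (Nat.card ((perpForm Q₁ v).IsometryEquiv (perpForm Q₂ w)) : E) =
        (Fintype.card F ^ (2 * m + 2) - quadraticGaussSum ψ (perpForm Q₁ v)) * K /
          Fintype.card F := by
    have hw0 := hw.trans_ne hv
    have hperp₂ : Module.finrank F (polarPerp Q₂ w) = 2 * m + 2 :=
      Nat.succ_injective ((finrank_polarPerp_add_one hF hw0).trans hV₂)
    rw [eq_div_iff hq, mul_comm, card_mul_natCard_isometryEquiv_of_even hF hψ
      (nondegenerate_perpForm hF h₁ hv) (nondegenerate_perpForm hF h₂ hw0) (hperp₂ ▸ hdim)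
      (hK v w hv hw), hperp₂, quadraticGaussSum_perpForm_congr hF hψ hG hv hw]
  have hsq := quadraticGaussSum_sq_of_even (E := E) hF hψ (nondegenerate_perpForm hF h₁ hv)
    (hperp₁ ▸ hdim)
  rw [hperp₁] at hsq
  rw [natCard_isometryEquiv_eq_mul_of_odd hF hψ h₂ hG hdim hV₂ hv hperp, mul_div_assoc',
    div_eq_iff hq]
  linear_combination -K * hsq

theorem natCast_natCard_isometryEquiv_of_quadraticGaussSum_eq [Fintype F] [Finite V₁] [Finite V₂]
    (hF : ringChar F ≠ 2) (hψ : ψ.IsPrimitive) (h₁ : Q₁.polarBilin.Nondegenerate)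
    (h₂ : Q₂.polarBilin.Nondegenerate) (hG : quadraticGaussSum ψ Q₁ = quadraticGaussSum ψ Q₂)
    {m : ℕ} (hV₁ : Module.finrank F V₁ = 2 * m + 1) (hV₂ : Module.finrank F V₂ = 2 * m + 1) :
    (Nat.card (Q₁.IsometryEquiv Q₂) : E) = 2 * (Fintype.card F : E) ^ m ^ 2 *
      ∏ i ∈ Finset.Icc 1 m, ((Fintype.card F : E) ^ (2 * i) - 1) := by
  induction m generalizing V₁ V₂ with
  | zero =>
    rw [natCard_isometryEquiv_of_finrank_eq_one hF hψ h₁ h₂ hG hV₁ hV₂]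
    simp
  | succ m ih =>
    rw [natCard_isometryEquiv_eq_mul_of_perp_perp hF hψ h₁ h₂ hG hV₁ hV₂
      fun v w hv hw v' w' hv' hw' ↦ ih
        (nondegenerate_perpForm hF (nondegenerate_perpForm hF h₁ hv) hv')
        (nondegenerate_perpForm hF (nondegenerate_perpForm hF h₂ (hw.trans_ne hv))
          (hw'.trans_ne hv'))
        (quadraticGaussSum_perpForm_congr hF hψ
          (quadraticGaussSum_perpForm_congr hF hψ hG hv hw) hv' hw')
        (Nat.add_right_cancel ((finrank_polarPerp_perpForm_add_two hF hv hv').trans hV₁))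
        (Nat.add_right_cancel ((finrank_polarPerp_perpForm_add_two hF (hw.trans_ne hv)
          (hw'.trans_ne hv')).trans hV₂)),
      Finset.prod_Icc_succ_top (by omega)]
    ring

theorem natCard_isometryEquiv_of_quadraticGaussSum_eq [Fintype F] [Finite V₁] [Finite V₂]
    (hF : ringChar F ≠ 2) (hψ : ψ.IsPrimitive) (h₁ : Q₁.polarBilin.Nondegenerate)
    (h₂ : Q₂.polarBilin.Nondegenerate) (hG : quadraticGaussSum ψ Q₁ = quadraticGaussSum ψ Q₂)
    {m : ℕ} (hV₁ : Module.finrank F V₁ = 2 * m + 1) (hV₂ : Module.finrank F V₂ = 2 * m + 1) :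
    Nat.card (Q₁.IsometryEquiv Q₂) = 2 * Fintype.card F ^ m ^ 2 *
      ∏ i ∈ Finset.Icc 1 m, (Fintype.card F ^ (2 * i) - 1) := by
  have hcast (i : ℕ) : ((Fintype.card F ^ (2 * i) - 1 : ℕ) : E) = Fintype.card F ^ (2 * i) - 1 := by
    rw [Nat.cast_pred (pow_pos Fintype.card_pos _), Nat.cast_pow]
  have h := natCast_natCard_isometryEquiv_of_quadraticGaussSum_eq hF hψ h₁ h₂ hG hV₁ hV₂
  simp only [← hcast] at h
  exact_mod_cast h

theorem equivalent_of_quadraticGaussSum_eq [Finite F] [Finite V₁] [Finite V₂] (hF : ringChar F ≠ 2)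
    (hψ : ψ.IsPrimitive) (h₁ : Q₁.polarBilin.Nondegenerate) (h₂ : Q₂.polarBilin.Nondegenerate)
    (hG : quadraticGaussSum ψ Q₁ = quadraticGaussSum ψ Q₂) {m : ℕ}
    (hV₁ : Module.finrank F V₁ = 2 * m + 1) (hV₂ : Module.finrank F V₂ = 2 * m + 1) :
    Q₁.Equivalent Q₂ := by
  have := Fintype.ofFinite F
  refine (Nat.card_pos_iff.1 ?_).1
  rw [natCard_isometryEquiv_of_quadraticGaussSum_eq hF hψ h₁ h₂ hG hV₁ hV₂]
  refine Nat.mul_pos (Nat.mul_pos two_pos (pow_pos Fintype.card_pos _))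
    (Finset.prod_pos fun i hi ↦ Nat.sub_pos_of_lt (Nat.one_lt_pow ?_ Fintype.one_lt_card))
  exact mul_ne_zero two_ne_zero (Nat.one_le_iff_ne_zero.1 (Finset.mem_Icc.1 hi).1)

theorem exists_equivalent_smul_of_odd [Finite F] [Finite V₁] [Finite V₂] (hF : ringChar F ≠ 2)
    (hψ : ψ.IsPrimitive) (h₁ : Q₁.polarBilin.Nondegenerate) (h₂ : Q₂.polarBilin.Nondegenerate)
    {m : ℕ} (hV₁ : Module.finrank F V₁ = 2 * m + 1) (hV₂ : Module.finrank F V₂ = 2 * m + 1) :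
    ∃ c : F, c ≠ 0 ∧ (c • Q₁).Equivalent Q₂ := by
  classical
  have := Fintype.ofFinite F
  suffices h : ∃ c : F, c ≠ 0 ∧ quadraticGaussSum ψ (c • Q₁) = quadraticGaussSum ψ Q₂ by
    obtain ⟨c, hc, hG⟩ := h
    exact ⟨c, hc, equivalent_of_quadraticGaussSum_eq hF hψ (nondegenerate_polarBilin_smul h₁ hc) h₂
      hG hV₁ hV₂⟩
  have hsq : quadraticGaussSum ψ Q₁ ^ 2 = quadraticGaussSum ψ Q₂ ^ 2 := by
    rw [quadraticGaussSum_sq hF hψ h₁, quadraticGaussSum_sq hF hψ h₂, hV₁, hV₂]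
  obtain h | h := sq_eq_sq_iff_eq_or_eq_neg.1 hsq
  · exact ⟨1, one_ne_zero, by rw [one_smul, h]⟩
  · obtain ⟨c, hc, hχ⟩ := exists_quadraticMulChar_eq_neg_one (F := F) (E := E) hF
    refine ⟨c, hc, ?_⟩
    rw [quadraticGaussSum_smul_of_nondegenerate hF hψ h₁ hc, hχ, hV₁,
      (odd_two_mul_add_one m).neg_one_pow, h, neg_one_mul, neg_neg]

end CountingIsometries

section Conjugation

open QuadraticMap hiding sq

variable {F V₁ V₂ : Type*} [Field F] [AddCommGroup V₁] [Module F V₁] [AddCommGroup V₂]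
  [Module F V₂] {Q₁ : QuadraticForm F V₁} {Q₂ : QuadraticForm F V₂}

/-- Conjugation by an isometry `Q₁ → Q₂`, as a bijection of the orthogonal groups. -/
def isometryConj (e : Q₁.IsometryEquiv Q₂) : Q₁.IsometryEquiv Q₁ ≃ Q₂.IsometryEquiv Q₂ where
  toFun f := e.symm.trans (f.trans e)
  invFun g := e.trans (g.trans e.symm)
  left_inv f := DFunLike.ext _ _ fun x ↦ by
    change e.symm (e (f (e.symm (e x)))) = f x
    rw [e.symm_apply_apply, e.symm_apply_apply]
  right_inv g := DFunLike.ext _ _ fun x ↦ by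
    change e (e.symm (g (e (e.symm x)))) = g x
    rw [e.apply_symm_apply, e.apply_symm_apply]

theorem isometryConj_trans (e : Q₁.IsometryEquiv Q₂) (f g : Q₁.IsometryEquiv Q₁) :
    isometryConj e (f.trans g) = (isometryConj e f).trans (isometryConj e g) :=
  DFunLike.ext _ _ fun x ↦
    congrArg (fun y ↦ e (g y)) (e.symm_apply_apply (f (e.symm x))).symm

/-- The orthogonal groups of `Q` and of its nonzero multiple `c Q` are the same. -/
def isometrySMulEquiv (Q : QuadraticForm F V₁) {c : F} (hc : c ≠ 0) :
    Q.IsometryEquiv Q ≃ (c • Q).IsometryEquiv (c • Q) where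
  toFun f := ⟨f.toLinearEquiv, fun v ↦ congrArg (c • ·) (f.map_app v)⟩
  invFun f := ⟨f.toLinearEquiv, fun v ↦ smul_right_injective F hc (f.map_app v)⟩
  left_inv _ := rfl
  right_inv _ := rfl

end Conjugation

theorem orthogonal_group_card_odd_general {F V₁ V₂ : Type*} [Field F] [Fintype F]
    (hF : Odd (Fintype.card F)) [AddCommGroup V₁] [Module F V₁] [AddCommGroup V₂] [Module F V₂]
    {Q₁ : QuadraticForm F V₁} {Q₂ : QuadraticForm F V₂} (h₁ : Q₁.polarBilin.Nondegenerate)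
    (h₂ : Q₂.polarBilin.Nondegenerate) {n : ℕ} (hn : Odd n) (hV₁ : Module.finrank F V₁ = n)
    (hV₂ : Module.finrank F V₂ = n) :
    (∃ e : Q₁.IsometryEquiv Q₁ ≃ Q₂.IsometryEquiv Q₂,
        ∀ f g : Q₁.IsometryEquiv Q₁, e (f.trans g) = (e f).trans (e g)) ∧
      Nat.card (Q₁.IsometryEquiv Q₁) = 2 * Fintype.card F ^ ((n - 1) ^ 2 / 4) *
        ∏ i ∈ Finset.Icc 1 ((n - 1) / 2), (Fintype.card F ^ (2 * i) - 1) := by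
  obtain ⟨m, rfl⟩ := hn
  have hchar : ringChar F ≠ 2 := by
    rw [Ne, FiniteField.even_card_iff_char_two, Nat.odd_iff.1 hF]
    exact one_ne_zero
  have : FiniteDimensional F V₁ := Module.finite_of_finrank_eq_succ hV₁
  have : FiniteDimensional F V₂ := Module.finite_of_finrank_eq_succ hV₂
  have : Finite V₁ := Module.finite_of_finite F
  have : Finite V₂ := Module.finite_of_finite F
  have hψ := AddChar.FiniteField.primitiveChar_to_Complex_isPrimitive F
  have hexp : (2 * m + 1 - 1) ^ 2 / 4 = m ^ 2 := by
    rw [Nat.add_sub_cancel, mul_pow]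
    exact Nat.mul_div_cancel_left _ four_pos
  have hrange : (2 * m + 1 - 1) / 2 = m := by omega
  rw [hexp, hrange]
  obtain ⟨c, hc, ⟨e⟩⟩ := exists_equivalent_smul_of_odd hchar hψ h₁ h₂ hV₁ hV₂
  exact ⟨⟨(isometrySMulEquiv Q₁ hc).trans (isometryConj e), fun f g ↦
    isometryConj_trans e (isometrySMulEquiv Q₁ hc f) (isometrySMulEquiv Q₁ hc g)⟩,
    natCard_isometryEquiv_of_quadraticGaussSum_eq hchar hψ h₁ h₁ rfl hV₁ hV₁⟩

/-- Let `q` be an odd prime power and `n` odd.  For any two nondegenerate quadratic forms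
`Q₁, Q₂` on `F_q^n`, the orthogonal groups (groups of self-isometries) are isomorphic —
witnessed by a composition-preserving bijection — and each has order
`2·q^{(n−1)²/4}·Π_{i=1}^{(n−1)/2} (q^{2i} − 1)`. -/
theorem orthogonal_group_card_odd (q n : ℕ)
    (hq : ∃ p k, Nat.Prime p ∧ Odd p ∧ 0 < k ∧ q = p ^ k) (hn : Odd n)
    (F : Type) [Field F] [Fintype F] (hF : Fintype.card F = q)
    (Q₁ Q₂ : QuadraticForm F (Fin n → F))
    (h₁ : Q₁.polarBilin.Nondegenerate) (h₂ : Q₂.polarBilin.Nondegenerate) :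
    (∃ e : Q₁.IsometryEquiv Q₁ ≃ Q₂.IsometryEquiv Q₂,
        ∀ f g : Q₁.IsometryEquiv Q₁, e (f.trans g) = (e f).trans (e g)) ∧
      Nat.card (Q₁.IsometryEquiv Q₁)
        = 2 * q ^ ((n - 1) ^ 2 / 4) * ∏ i ∈ Finset.Icc 1 ((n - 1) / 2), (q ^ (2 * i) - 1) := by
  obtain ⟨p, k, -, hp, -, rfl⟩ := hq
  exact hF ▸ orthogonal_group_card_odd_general (hF ▸ hp.pow) h₁ h₂ hn (by simp) (by simp)
end

section
/- As formal power series identities in infinitely many variables, Σ_{λ partition, λ' even} s_λ(x) = Π_{i<j} (1 − x_i x_j)^{−1}, where the sum is over partitions all of whose conjugate parts are even (i.e., all columns of λ have even length) and s_λ is the Schur function. -/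
/-!
Both sides of Littlewood's identity satisfy the same recursion in the number of variables.

Let `s_{ν/μ}(y)` be the skew Schur function in a single variable `y`, which is `y ^ |ν / μ|` if
`ν / μ` is a horizontal strip and `0` otherwise. Removing the largest entries of a tableau gives the
branching rule `s_ν(x₀, …, xₙ) = ∑_μ s_{ν/μ}(xₙ) s_μ(x₀, …, xₙ₋₁)`. Over every `μ` there is exactly
one diagram with even columns at a horizontal strip above it and exactly one below it, and the two
strips have the same size. Hence, in `∑_ν s_ν(x₀, …, xₙ)` over the `ν` with even columns, `s_{ν/μ}`
may be replaced by `s_{μ/ν}`. Pieri's rule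
`∑_μ s_{μ/ν}(y) s_μ(x₀, …, xₙ₋₁) = ∏_{i < n} (1 - xᵢ y)⁻¹ s_ν(x₀, …, xₙ₋₁)`, a consequence of the
local rule of RSK, then splits off exactly the factors that involve `xₙ`.
-/

open Finset MvPowerSeries
open scoped MvPowerSeries.WithPiTopology

/-- A topological commutative semiring in which every family is summable, so that generating
functions can be rearranged without convergence conditions. The index sets live in `Type`, where
tableaux do. -/
class SummableSemiring (S : Type*) [CommSemiring S] [TopologicalSpace S] : Prop
    extends IsTopologicalSemiring S, T3Space S where
  summable {ι : Type} (f : ι → S) : Summable f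

namespace SummableSemiring

instance : SummableSemiring ℕ∞ where
  summable _ := (hasSum_of_isLUB _ isLUB_iSup).summable

instance {σ R : Type*} [CommSemiring R] [TopologicalSpace R] [SummableSemiring R] :
    SummableSemiring (MvPowerSeries σ R) where
  toT3Space := inferInstanceAs (T3Space ((σ →₀ ℕ) → R))
  summable _ := (WithPiTopology.summable_iff_summable_coeff).2 fun _ => summable _

variable {S : Type*} [CommSemiring S] [TopologicalSpace S] [SummableSemiring S] {ι κ : Type}

theorem tsum_comm (f : ι → κ → S) : ∑' j, ∑' i, f i j = ∑' i, ∑' j, f i j :=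
  (summable (Function.uncurry f)).tsum_comm' (fun _ => summable _) fun _ => summable _

theorem tsum_sigma {κ : ι → Type} (f : (Σ i, κ i) → S) :
    ∑' p, f p = ∑' i, ∑' j, f ⟨i, j⟩ :=
  (summable f).tsum_sigma' fun _ => summable _

theorem tsum_mul_left (a : S) (f : ι → S) : ∑' i, a * f i = a * ∑' i, f i :=
  (summable f).tsum_mul_left a

theorem tsum_mul_right (a : S) (f : ι → S) : ∑' i, f i * a = (∑' i, f i) * a :=
  (summable f).tsum_mul_right a

theorem tsum_mul_tsum (f : ι → S) (g : κ → S) :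
    (∑' i, f i) * ∑' j, g j = ∑' p : ι × κ, f p.1 * g p.2 :=
  (summable f).tsum_mul_tsum (summable g) (summable _)

theorem prod_tsum [Fintype ι] (f : ι → κ → S) :
    ∏ i, ∑' k, f i k = ∑' c : ι → κ, ∏ i, f i (c i) := by
  refine Fintype.induction_empty_option (P := fun ι _ => ∀ f : ι → κ → S,
    ∏ i, ∑' k, f i k = ∑' c : ι → κ, ∏ i, f i (c i)) ?_ ?_ ?_ ι f
  · intro α β _ e ih f
    let _ := Fintype.ofEquiv β e.symm
    rw [← e.prod_comp, ih, ← (e.arrowCongr (Equiv.refl κ)).tsum_eq]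
    exact tsum_congr fun c => by simp [← e.prod_comp]
  · simp
  · intro α _ ih f
    rw [Fintype.prod_option, ih, tsum_mul_tsum, ← Equiv.piOptionEquivProd.symm.tsum_eq]
    exact tsum_congr fun p => by simp [Fintype.prod_option, Equiv.piOptionEquivProd]

theorem prod_tsum_pow (s : Finset ι) (f : ι → S) :
    ∏ i ∈ s, ∑' k : ℕ, f i ^ k =
      ∑' c : {c : ι →₀ ℕ // (c.support : Set ι) ⊆ s}, c.1.prod fun i k => f i ^ k := by
  let e : {c : ι →₀ ℕ // (c.support : Set ι) ⊆ s} ≃ (s → ℕ) :=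
    (Finsupp.restrictSupportEquiv (s : Set ι) ℕ).trans Finsupp.equivFunOnFinite
  rw [← prod_coe_sort, prod_tsum, ← e.tsum_eq]
  refine tsum_congr fun c => ?_
  rw [Finsupp.prod_of_support_subset c.1 (coe_subset.1 c.2) _ fun _ _ => pow_zero _]
  exact prod_coe_sort s fun i => f i ^ c.1 i

end SummableSemiring

theorem tsum_ite_eq_tsum_subtype {S ι : Type*} [AddCommMonoid S] [TopologicalSpace S]
    (P : ι → Prop) [DecidablePred P] (f : ι → S) :
    ∑' i, (if P i then f i else 0) = ∑' i : {i // P i}, f i :=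
  (tsum_subtype {i | P i} f).symm ▸ tsum_congr fun i => by simp [Set.indicator_apply]

theorem tsum_one_eq_card (ι : Type) : ∑' _ : ι, (1 : ℕ∞) = ENat.card ι := by
  refine ENat.toENNReal_strictMono.injective ?_
  change ENat.toENNRealRingHom _ = _
  rw [(SummableSemiring.summable _).map_tsum _ ENat.continuous_toENNReal, ← ENNReal.tsum_one]
  simp

theorem coeff_tsum_monomial {σ : Type*} {ι : Type} (w : ι → σ →₀ ℕ) (d : σ →₀ ℕ) :
    coeff d (∑' i, monomial (w i) (1 : ℕ∞)) = ENat.card {i // w i = d} := by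
  classical
  rw [(SummableSemiring.summable _).map_tsum _ (WithPiTopology.continuous_coeff ℕ∞ d),
    ← tsum_one_eq_card, ← tsum_ite_eq_tsum_subtype (fun i => w i = d) fun _ => 1]
  simp only [coeff_monomial, eq_comm]

/-! ### Young diagrams and horizontal strips -/

section RowLengths

variable {μ ν : YoungDiagram}

theorem eq_of_rowLen_eq (h : ∀ i, μ.rowLen i = ν.rowLen i) : μ = ν := by
  ext ⟨i, j⟩
  simp only [YoungDiagram.mem_cells, YoungDiagram.mem_iff_lt_rowLen, h]

theorem le_iff_rowLen_le : μ ≤ ν ↔ ∀ i, μ.rowLen i ≤ ν.rowLen i := by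
  refine ⟨fun h i => le_of_forall_lt fun j hj => ?_, fun h ⟨i, j⟩ hc => ?_⟩
  · exact YoungDiagram.mem_iff_lt_rowLen.1 (h (YoungDiagram.mem_iff_lt_rowLen.2 hj))
  · exact YoungDiagram.mem_iff_lt_rowLen.2 ((YoungDiagram.mem_iff_lt_rowLen.1 hc).trans_le (h i))

theorem lt_rowLen_iff_lt_colLen {i j : ℕ} : j < μ.rowLen i ↔ i < μ.colLen j := by
  rw [← YoungDiagram.mem_iff_lt_rowLen, YoungDiagram.mem_iff_lt_colLen]

theorem rowLen_eq_zero_of_colLen_zero_le {i : ℕ} (hi : μ.colLen 0 ≤ i) : μ.rowLen i = 0 := by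
  rw [← not_lt, ← lt_rowLen_iff_lt_colLen] at hi
  lia

theorem card_eq_sum_rowLen {N : ℕ} (hN : μ.rowLen N = 0) :
    μ.card = ∑ i ∈ range N, μ.rowLen i := by
  have row_lt : ∀ c ∈ μ.cells, c.1 ∈ range N := fun c hc => by
    rw [YoungDiagram.mem_cells, ← Prod.mk.eta (p := c), YoungDiagram.mem_iff_lt_rowLen] at hc
    by_contra hi
    have := μ.rowLen_anti N c.1 (by simpa using hi)
    lia
  rw [YoungDiagram.card, card_eq_sum_card_fiberwise row_lt]
  exact sum_congr rfl fun i _ => μ.rowLen_eq_card.symm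

/-- The Young diagram with row lengths `f`, cut off at row `N`. -/
def ofRowLen (f : ℕ → ℕ) (hf : Antitone f) (N : ℕ) : YoungDiagram where
  cells := (range N ×ˢ range (f 0)).filter fun c => c.2 < f c.1
  isLowerSet := by
    rintro ⟨i, j⟩ ⟨i', j'⟩ hle h
    obtain ⟨hi, hj⟩ := Prod.mk_le_mk.1 hle
    have := hf hi
    simp only [coe_filter, mem_product, mem_range, Set.mem_ofPred_eq] at h ⊢
    lia

theorem rowLen_ofRowLen {f : ℕ → ℕ} (hf : Antitone f) {N : ℕ} (hN : f N = 0) (i : ℕ) :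
    (ofRowLen f hf N).rowLen i = f i := by
  refine eq_of_forall_lt_iff fun j => ?_
  rw [← YoungDiagram.mem_iff_lt_rowLen, ← YoungDiagram.mem_cells]
  simp only [ofRowLen, mem_filter, mem_product, mem_range, and_iff_right_iff_imp]
  intro hj
  refine ⟨?_, hj.trans_le (hf i.zero_le)⟩
  by_contra! hi
  have := hf hi
  lia

end RowLengths

/-- `ν / μ` is a horizontal strip, expressed by the interlacing of the row lengths. -/
def HorizontalStrip (μ ν : YoungDiagram) : Prop :=
  ∀ i, μ.rowLen i ≤ ν.rowLen i ∧ ν.rowLen (i + 1) ≤ μ.rowLen i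

theorem HorizontalStrip.le {μ ν : YoungDiagram} (h : HorizontalStrip μ ν) : μ ≤ ν :=
  le_iff_rowLen_le.2 fun i => (h i).1

theorem HorizontalStrip.card_le {μ ν : YoungDiagram} (h : HorizontalStrip μ ν) :
    μ.card ≤ ν.card :=
  card_le_card (YoungDiagram.cells_subset_iff.2 h.le)

theorem horizontalStrip_iff_mem {μ ν : YoungDiagram} :
    HorizontalStrip μ ν ↔ μ ≤ ν ∧ ∀ i j, (i + 1, j) ∈ ν → (i, j) ∈ μ := by
  simp only [HorizontalStrip, forall_and, le_iff_rowLen_le, YoungDiagram.mem_iff_lt_rowLen]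
  exact and_congr_right fun _ => forall_congr' fun i =>
    ⟨fun h j hj => hj.trans_le h, fun h => le_of_forall_lt h⟩

theorem horizontalStrip_bot_iff {μ : YoungDiagram} : HorizontalStrip μ ⊥ ↔ μ = ⊥ := by
  refine ⟨fun h => le_bot_iff.1 h.le, ?_⟩
  rintro rfl
  exact horizontalStrip_iff_mem.2 ⟨le_rfl, fun i j h => absurd h (YoungDiagram.notMem_bot _)⟩

/-! ### The local rule -/

section LocalRule

variable {μ ν : YoungDiagram}

theorem horizontalStrip_outer_iff {ρ : YoungDiagram} :
    HorizontalStrip μ ρ ∧ HorizontalStrip ν ρ ↔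
      max (μ.rowLen 0) (ν.rowLen 0) ≤ ρ.rowLen 0 ∧
        ∀ i, ρ.rowLen (i + 1) ∈
          Set.Icc (max (μ.rowLen (i + 1)) (ν.rowLen (i + 1))) (min (μ.rowLen i) (ν.rowLen i)) := by
  simp only [HorizontalStrip, Set.mem_Icc, max_le_iff, le_min_iff]
  refine ⟨fun ⟨hμ, hν⟩ => ⟨⟨(hμ 0).1, (hν 0).1⟩, fun i => ?_⟩, fun ⟨h0, h⟩ => ?_⟩
  · exact ⟨⟨(hμ (i + 1)).1, (hν (i + 1)).1⟩, (hμ i).2, (hν i).2⟩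
  · refine ⟨fun i => ⟨?_, (h i).2.1⟩, fun i => ⟨?_, (h i).2.2⟩⟩
    · cases i; exacts [h0.1, (h _).1.1]
    · cases i; exacts [h0.2, (h _).1.2]

theorem horizontalStrip_inner_iff {κ : YoungDiagram} :
    HorizontalStrip κ μ ∧ HorizontalStrip κ ν ↔
      ∀ i, κ.rowLen i ∈
        Set.Icc (max (μ.rowLen (i + 1)) (ν.rowLen (i + 1))) (min (μ.rowLen i) (ν.rowLen i)) := by
  simp only [HorizontalStrip, Set.mem_Icc, max_le_iff, le_min_iff, ← forall_and]
  exact forall_congr' fun i => by tauto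

/-- The reflection of `t` in the interval `[max (μ (i + 1)) (ν (i + 1)), min (μ i) (ν i)]` between
consecutive row lengths, the elementary move of the local rule for RSK growth diagrams. -/
def reflectRow (μ ν : YoungDiagram) (i t : ℕ) : ℕ :=
  max (μ.rowLen (i + 1)) (ν.rowLen (i + 1)) + min (μ.rowLen i) (ν.rowLen i) - t

/-- The diagram `κ` of the local rule: it closes the pair of horizontal strips `ρ / μ`, `ρ / ν` to a
square of horizontal strips. -/
def localRuleInner (ρ : {ρ // HorizontalStrip μ ρ ∧ HorizontalStrip ν ρ}) : YoungDiagram :=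
  ofRowLen (fun i => reflectRow μ ν i (ρ.1.rowLen (i + 1)))
    (antitone_nat_of_succ_le fun i => by
      have := (horizontalStrip_outer_iff.1 ρ.2).2 i
      have := (horizontalStrip_outer_iff.1 ρ.2).2 (i + 1)
      grind [reflectRow])
    (ρ.1.colLen 0)

theorem rowLen_localRuleInner (ρ : {ρ // HorizontalStrip μ ρ ∧ HorizontalStrip ν ρ}) (i : ℕ) :
    (localRuleInner ρ).rowLen i = reflectRow μ ν i (ρ.1.rowLen (i + 1)) := by
  refine rowLen_ofRowLen _ ?_ i
  have zero_row := rowLen_eq_zero_of_colLen_zero_le (le_refl (ρ.1.colLen 0))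
  have := ρ.2.1 (ρ.1.colLen 0)
  have := (horizontalStrip_outer_iff.1 ρ.2).2 (ρ.1.colLen 0)
  grind [reflectRow]

theorem horizontalStrip_localRuleInner (ρ : {ρ // HorizontalStrip μ ρ ∧ HorizontalStrip ν ρ}) :
    HorizontalStrip (localRuleInner ρ) μ ∧ HorizontalStrip (localRuleInner ρ) ν := by
  refine horizontalStrip_inner_iff.2 fun i => ?_
  have := (horizontalStrip_outer_iff.1 ρ.2).2 i
  grind [rowLen_localRuleInner, reflectRow]

/-- The diagram `ρ` of the local rule, inverse to `localRuleInner`. Its first row is not subject to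
an upper bound and absorbs the free parameter `k`. -/
def localRuleOuter (k : ℕ) (κ : {κ // HorizontalStrip κ μ ∧ HorizontalStrip κ ν}) :
    YoungDiagram :=
  ofRowLen
    (fun
      | 0 => max (μ.rowLen 0) (ν.rowLen 0) + k
      | i + 1 => reflectRow μ ν i (κ.1.rowLen i))
    (antitone_nat_of_succ_le fun i => by
      have := horizontalStrip_inner_iff.1 κ.2 i
      cases i with
      | zero => grind [reflectRow]
      | succ i =>
        have := horizontalStrip_inner_iff.1 κ.2 (i + 1)
        have := horizontalStrip_inner_iff.1 κ.2 i
        grind [reflectRow])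
    (μ.colLen 0 + 1)

theorem rowLen_localRuleOuter (k : ℕ) (κ : {κ // HorizontalStrip κ μ ∧ HorizontalStrip κ ν})
    (i : ℕ) :
    (localRuleOuter k κ).rowLen i =
      match i with
      | 0 => max (μ.rowLen 0) (ν.rowLen 0) + k
      | i + 1 => reflectRow μ ν i (κ.1.rowLen i) := by
  refine rowLen_ofRowLen _ ?_ i
  have zero_row := rowLen_eq_zero_of_colLen_zero_le (le_refl (μ.colLen 0))
  have := horizontalStrip_inner_iff.1 κ.2 (μ.colLen 0)
  grind [reflectRow]

theorem horizontalStrip_localRuleOuter (k : ℕ)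
    (κ : {κ // HorizontalStrip κ μ ∧ HorizontalStrip κ ν}) :
    HorizontalStrip μ (localRuleOuter k κ) ∧ HorizontalStrip ν (localRuleOuter k κ) := by
  refine horizontalStrip_outer_iff.2 ⟨by simp [rowLen_localRuleOuter], fun i => ?_⟩
  have := horizontalStrip_inner_iff.1 κ.2 i
  grind [rowLen_localRuleOuter, reflectRow]

variable (μ ν) in
/-- The local rule of RSK growth diagrams. -/
def localRule :
    {ρ // HorizontalStrip μ ρ ∧ HorizontalStrip ν ρ} ≃
      ℕ × {κ // HorizontalStrip κ μ ∧ HorizontalStrip κ ν} where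
  toFun ρ := (ρ.1.rowLen 0 - max (μ.rowLen 0) (ν.rowLen 0),
    ⟨localRuleInner ρ, horizontalStrip_localRuleInner ρ⟩)
  invFun p := ⟨localRuleOuter p.1 p.2, horizontalStrip_localRuleOuter p.1 p.2⟩
  left_inv ρ := by
    refine Subtype.ext (eq_of_rowLen_eq fun i => ?_)
    obtain ⟨h0, h⟩ := horizontalStrip_outer_iff.1 ρ.2
    rw [rowLen_localRuleOuter]
    cases i with
    | zero => exact Nat.add_sub_cancel' h0
    | succ i => grind [rowLen_localRuleInner, reflectRow]
  right_inv p := by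
    refine Prod.ext ?_ (Subtype.ext (eq_of_rowLen_eq fun i => ?_))
    · simp [rowLen_localRuleOuter]
    · have := horizontalStrip_inner_iff.1 p.2.2 i
      grind [rowLen_localRuleInner, rowLen_localRuleOuter, reflectRow]

theorem card_localRuleOuter_add_card (k : ℕ)
    (κ : {κ // HorizontalStrip κ μ ∧ HorizontalStrip κ ν}) :
    (localRuleOuter k κ).card + κ.1.card = μ.card + ν.card + k := by
  set ρ := localRuleOuter k κ
  set N := ρ.colLen 0
  have ρ_zero : ρ.rowLen N = 0 := rowLen_eq_zero_of_colLen_zero_le le_rfl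
  obtain ⟨hμ, hν⟩ := horizontalStrip_localRuleOuter k κ
  have μ_zero : μ.rowLen N = 0 := by grind [hμ N]
  have ν_zero : ν.rowLen N = 0 := by grind [hν N]
  have κ_zero : κ.1.rowLen N = 0 := by grind [κ.2.1 N]
  have ρ_succ_zero : ρ.rowLen (N + 1) = 0 := rowLen_eq_zero_of_colLen_zero_le N.le_succ
  have row (i : ℕ) : ρ.rowLen (i + 1) + κ.1.rowLen i =
      max (μ.rowLen (i + 1)) (ν.rowLen (i + 1)) + min (μ.rowLen i) (ν.rowLen i) := by
    have := horizontalStrip_inner_iff.1 κ.2 i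
    grind [rowLen_localRuleOuter, reflectRow]
  calc ρ.card + κ.1.card
      = ∑ i ∈ range N, (ρ.rowLen (i + 1) + κ.1.rowLen i) + ρ.rowLen 0 := by
        rw [card_eq_sum_rowLen ρ_succ_zero, card_eq_sum_rowLen κ_zero, sum_range_succ',
          sum_add_distrib]
        lia
    _ = ∑ i ∈ range (N + 1), max (μ.rowLen i) (ν.rowLen i)
          + ∑ i ∈ range N, min (μ.rowLen i) (ν.rowLen i) + k := by
        rw [sum_congr rfl fun i _ => row i, sum_add_distrib, sum_range_succ']
        simp only [ρ, rowLen_localRuleOuter]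
        lia
    _ = ∑ i ∈ range N, (max (μ.rowLen i) (ν.rowLen i) + min (μ.rowLen i) (ν.rowLen i)) + k := by
        rw [sum_range_succ, μ_zero, ν_zero, max_self, add_zero, sum_add_distrib]
    _ = μ.card + ν.card + k := by
        rw [card_eq_sum_rowLen μ_zero, card_eq_sum_rowLen ν_zero, ← sum_add_distrib]
        simp only [max_add_min]

end LocalRule

/-! ### Skew Schur functions in one variable -/

section SkewSchur

variable {S : Type*} [CommSemiring S]

open Classical in
/-- The skew Schur function `s_{ν/μ}(y)` in the single variable `y`. -/
noncomputable def skewSchurOne (y : S) (ν μ : YoungDiagram) : S :=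
  if HorizontalStrip μ ν then y ^ (ν.card - μ.card) else 0

theorem skewSchurOne_of_horizontalStrip (y : S) {μ ν : YoungDiagram} (h : HorizontalStrip μ ν) :
    skewSchurOne y ν μ = y ^ (ν.card - μ.card) :=
  if_pos h

theorem skewSchurOne_of_not_horizontalStrip (y : S) {μ ν : YoungDiagram}
    (h : ¬HorizontalStrip μ ν) : skewSchurOne y ν μ = 0 :=
  if_neg h

theorem skewSchurOne_bot (y : S) (μ : YoungDiagram) [Decidable (μ = ⊥)] :
    skewSchurOne y ⊥ μ = if μ = ⊥ then 1 else 0 := by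
  split_ifs with h
  · subst h
    rw [skewSchurOne_of_horizontalStrip y (horizontalStrip_bot_iff.2 rfl), Nat.sub_self, pow_zero]
  · exact skewSchurOne_of_not_horizontalStrip y fun hstrip => h (horizontalStrip_bot_iff.1 hstrip)

variable [TopologicalSpace S]

theorem tsum_skewSchurOne (y : S) (ν : YoungDiagram) (f : YoungDiagram → S) :
    ∑' μ, skewSchurOne y ν μ * f μ =
      ∑' μ : {μ // HorizontalStrip μ ν}, y ^ (ν.card - μ.1.card) * f μ := by
  classical
  rw [← tsum_ite_eq_tsum_subtype (fun μ => HorizontalStrip μ ν) fun μ =>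
    y ^ (ν.card - μ.card) * f μ]
  exact tsum_congr fun μ => by
    by_cases h : HorizontalStrip μ ν <;> simp [skewSchurOne, h]

variable [SummableSemiring S]

theorem tsum_skewSchurOne_mul_skewSchurOne (y z : S) (μ ν : YoungDiagram) :
    ∑' ρ, skewSchurOne y ρ μ * skewSchurOne z ρ ν =
      (∑' k : ℕ, (y * z) ^ k) * ∑' κ, skewSchurOne z μ κ * skewSchurOne y ν κ := by
  classical
  have outer : ∑' ρ, skewSchurOne y ρ μ * skewSchurOne z ρ ν =
      ∑' ρ : {ρ // HorizontalStrip μ ρ ∧ HorizontalStrip ν ρ},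
        y ^ (ρ.1.card - μ.card) * z ^ (ρ.1.card - ν.card) := by
    simp only [skewSchurOne, ite_zero_mul_ite_zero]
    exact tsum_ite_eq_tsum_subtype (fun ρ => HorizontalStrip μ ρ ∧ HorizontalStrip ν ρ) _
  have inner : ∑' κ, skewSchurOne z μ κ * skewSchurOne y ν κ =
      ∑' κ : {κ // HorizontalStrip κ μ ∧ HorizontalStrip κ ν},
        z ^ (μ.card - κ.1.card) * y ^ (ν.card - κ.1.card) := by
    simp only [skewSchurOne, ite_zero_mul_ite_zero]
    exact tsum_ite_eq_tsum_subtype (fun κ => HorizontalStrip κ μ ∧ HorizontalStrip κ ν) _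
  rw [outer, inner, SummableSemiring.tsum_mul_tsum, ← (localRule μ ν).symm.tsum_eq]
  refine tsum_congr fun ⟨k, κ⟩ => ?_
  have hcard := card_localRuleOuter_add_card k κ
  have hμ := κ.2.1.card_le
  have hν := κ.2.2.card_le
  change y ^ ((localRuleOuter k κ).card - μ.card) * z ^ ((localRuleOuter k κ).card - ν.card) = _
  rw [show (localRuleOuter k κ).card - μ.card = k + (ν.card - κ.1.card) by lia,
    show (localRuleOuter k κ).card - ν.card = k + (μ.card - κ.1.card) by lia]
  ring

end SkewSchur

/-! ### Diagrams with even columns -/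

section EvenColumns

variable {μ ν : YoungDiagram}

/-- Every part of the conjugate partition `μ'` is even. -/
def HasEvenColumns (μ : YoungDiagram) : Prop :=
  ∀ j, Even (μ.colLen j)

theorem hasEvenColumns_iff_rowLen :
    HasEvenColumns μ ↔ ∀ i, μ.rowLen (2 * i) = μ.rowLen (2 * i + 1) := by
  refine ⟨fun h i => eq_of_forall_lt_iff fun j => ?_, fun h j => ?_⟩
  · obtain ⟨c, hc⟩ := h j
    rw [lt_rowLen_iff_lt_colLen, lt_rowLen_iff_lt_colLen]
    lia
  · by_contra hodd
    obtain ⟨i, hi⟩ := Nat.not_even_iff_odd.1 hodd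
    have : 2 * i < μ.colLen j ↔ 2 * i + 1 < μ.colLen j := by
      rw [← lt_rowLen_iff_lt_colLen, ← lt_rowLen_iff_lt_colLen, h]
    lia

theorem hasEvenColumns_bot : HasEvenColumns ⊥ := fun j => by
  have : (⊥ : YoungDiagram).colLen j = 0 :=
    Nat.eq_zero_of_not_pos fun h =>
      YoungDiagram.notMem_bot _ (YoungDiagram.mem_iff_lt_colLen.2 h)
  simp [this]

/-- The unique diagram with even columns obtained from `μ` by adding a horizontal strip. -/
def evenColumnsHull (μ : YoungDiagram) : YoungDiagram :=
  ofRowLen (fun i => μ.rowLen (2 * (i / 2))) (fun i j _ => μ.rowLen_anti _ _ (by lia))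
    (2 * μ.colLen 0)

/-- The unique diagram with even columns obtained from `μ` by removing a horizontal strip. -/
def evenColumnsCore (μ : YoungDiagram) : YoungDiagram :=
  ofRowLen (fun i => μ.rowLen (2 * (i / 2) + 1)) (fun i j _ => μ.rowLen_anti _ _ (by lia))
    (2 * μ.colLen 0)

theorem rowLen_evenColumnsHull (i : ℕ) :
    (evenColumnsHull μ).rowLen i = μ.rowLen (2 * (i / 2)) :=
  rowLen_ofRowLen _ (by exact rowLen_eq_zero_of_colLen_zero_le (by lia)) i

theorem rowLen_evenColumnsCore (i : ℕ) :
    (evenColumnsCore μ).rowLen i = μ.rowLen (2 * (i / 2) + 1) :=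
  rowLen_ofRowLen _ (by exact rowLen_eq_zero_of_colLen_zero_le (by lia)) i

theorem hasEvenColumns_and_horizontalStrip_iff_eq_evenColumnsHull :
    HasEvenColumns ν ∧ HorizontalStrip μ ν ↔ ν = evenColumnsHull μ := by
  rw [hasEvenColumns_iff_rowLen]
  constructor
  · rintro ⟨heven, hstrip⟩
    refine eq_of_rowLen_eq fun i => ?_
    have := heven (i / 2)
    have := hstrip (2 * (i / 2))
    rw [rowLen_evenColumnsHull]
    obtain h | h : i = 2 * (i / 2) ∨ i = 2 * (i / 2) + 1 := by lia
    all_goals grind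
  · rintro rfl
    refine ⟨fun i => ?_, fun i => ?_⟩ <;> simp only [rowLen_evenColumnsHull]
    · congr 1; lia
    · exact ⟨μ.rowLen_anti _ _ (by lia), μ.rowLen_anti _ _ (by lia)⟩

theorem hasEvenColumns_and_horizontalStrip_iff_eq_evenColumnsCore :
    HasEvenColumns ν ∧ HorizontalStrip ν μ ↔ ν = evenColumnsCore μ := by
  rw [hasEvenColumns_iff_rowLen]
  constructor
  · rintro ⟨heven, hstrip⟩
    refine eq_of_rowLen_eq fun i => ?_
    have := heven (i / 2)
    have := hstrip (2 * (i / 2))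
    have := hstrip (2 * (i / 2) + 1)
    rw [rowLen_evenColumnsCore]
    obtain h | h : i = 2 * (i / 2) ∨ i = 2 * (i / 2) + 1 := by lia
    all_goals grind
  · rintro rfl
    refine ⟨fun i => ?_, fun i => ?_⟩ <;> simp only [rowLen_evenColumnsCore]
    · congr 1; lia
    · exact ⟨μ.rowLen_anti _ _ (by lia), μ.rowLen_anti _ _ (by lia)⟩

theorem card_evenColumnsHull_add_card_evenColumnsCore (μ : YoungDiagram) :
    (evenColumnsHull μ).card + (evenColumnsCore μ).card = 2 * μ.card := by
  have pairs (f : ℕ → ℕ) (N : ℕ) :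
      ∑ i ∈ range (2 * N), (f (2 * (i / 2)) + f (2 * (i / 2) + 1)) =
        2 * ∑ i ∈ range (2 * N), f i := by
    induction N with
    | zero => simp
    | succ N ih =>
      rw [show 2 * (N + 1) = 2 * N + 1 + 1 by ring]
      simp only [sum_range_succ, ih, show (2 * N + 1) / 2 = N by lia, show 2 * N / 2 = N by lia]
      ring
  have hzero {i : ℕ} (hi : 2 * μ.colLen 0 ≤ i) : μ.rowLen i = 0 :=
    rowLen_eq_zero_of_colLen_zero_le (by lia)
  rw [card_eq_sum_rowLen (N := 2 * μ.colLen 0) (hzero le_rfl),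
    card_eq_sum_rowLen (μ := evenColumnsHull μ) (N := 2 * μ.colLen 0)
      (by rw [rowLen_evenColumnsHull]; exact hzero (by lia)),
    card_eq_sum_rowLen (μ := evenColumnsCore μ) (N := 2 * μ.colLen 0)
      (by rw [rowLen_evenColumnsCore]; exact hzero (by lia)),
    ← pairs, ← sum_add_distrib]
  simp only [rowLen_evenColumnsHull, rowLen_evenColumnsCore]

theorem tsum_hasEvenColumns_skewSchurOne {S : Type*} [CommSemiring S] [TopologicalSpace S]
    (y : S) (μ : YoungDiagram) :
    ∑' ν : {ν // HasEvenColumns ν}, skewSchurOne y ν μ =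
      ∑' ν : {ν // HasEvenColumns ν}, skewSchurOne y μ ν := by
  obtain ⟨even_hull, strip_hull⟩ :=
    hasEvenColumns_and_horizontalStrip_iff_eq_evenColumnsHull.2 (rfl : _ = evenColumnsHull μ)
  obtain ⟨even_core, strip_core⟩ :=
    hasEvenColumns_and_horizontalStrip_iff_eq_evenColumnsCore.2 (rfl : _ = evenColumnsCore μ)
  rw [tsum_eq_single ⟨evenColumnsHull μ, even_hull⟩ fun ν hν =>
      skewSchurOne_of_not_horizontalStrip y fun h => hν <| Subtype.ext <|
        hasEvenColumns_and_horizontalStrip_iff_eq_evenColumnsHull.1 ⟨ν.2, h⟩,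
    tsum_eq_single ⟨evenColumnsCore μ, even_core⟩ fun ν hν =>
      skewSchurOne_of_not_horizontalStrip y fun h => hν <| Subtype.ext <|
        hasEvenColumns_and_horizontalStrip_iff_eq_evenColumnsCore.1 ⟨ν.2, h⟩,
    skewSchurOne_of_horizontalStrip y strip_hull, skewSchurOne_of_horizontalStrip y strip_core]
  congr 1
  have := card_evenColumnsHull_add_card_evenColumnsCore μ
  lia

end EvenColumns

/-! ### Tableaux and Schur polynomials -/

section BoundedTableaux

variable {n : ℕ} {μ ν : YoungDiagram}

/-- Semistandard Young tableaux of shape `μ` with entries in `{0, …, n - 1}`. -/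
abbrev BoundedTableau (n : ℕ) (μ : YoungDiagram) : Type :=
  {T : SemistandardYoungTableau μ // ∀ i j, (i, j) ∈ μ → T i j < n}

/-- The tableau of shape `ν` extending a tableau `T` of shape `μ` by entries `n` on the horizontal
strip `ν / μ`. -/
def BoundedTableau.extend (T : BoundedTableau n μ) (h : HorizontalStrip μ ν) :
    BoundedTableau (n + 1) ν where
  val :=
    { entry := fun i j => if (i, j) ∈ μ then T.1 i j else if (i, j) ∈ ν then n else 0
      row_weak' := fun {i j₁ j₂} hj hν => by
        by_cases h₂ : (i, j₂) ∈ μ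
        · simpa only [h₂, μ.up_left_mem le_rfl hj.le h₂, if_true] using T.1.row_weak hj h₂
        · rw [if_neg h₂, if_pos hν]
          split_ifs with h₁
          exacts [(T.2 _ _ h₁).le, le_rfl, n.zero_le]
      col_strict' := fun {i₁ i₂ j} hi hν => by
        by_cases h₂ : (i₂, j) ∈ μ
        · simpa only [h₂, μ.up_left_mem hi.le le_rfl h₂, if_true] using T.1.col_strict hi h₂
        · have h₁ : (i₁, j) ∈ μ :=
            (horizontalStrip_iff_mem.1 h).2 i₁ j (ν.up_left_mem hi le_rfl hν)
          rw [if_pos h₁, if_neg h₂, if_pos hν]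
          exact T.2 _ _ h₁
      zeros' := fun {i j} hν => by
        rw [if_neg fun hμ => hν (h.le hμ), if_neg hν] }
  property i j hν := by
    change (if (i, j) ∈ μ then T.1 i j else if (i, j) ∈ ν then n else 0) < n + 1
    split_ifs with hμ
    exacts [(T.2 _ _ hμ).trans n.lt_succ_self, n.lt_succ_self]

theorem BoundedTableau.extend_apply (T : BoundedTableau n μ) (h : HorizontalStrip μ ν) (i j : ℕ) :
    (T.extend h).1 i j = if (i, j) ∈ μ then T.1 i j else if (i, j) ∈ ν then n else 0 :=
  rfl

/-- The cells of a tableau with entries less than `n`. -/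
def shapeBelow (T : SemistandardYoungTableau ν) (n : ℕ) : YoungDiagram where
  cells := ν.cells.filter fun c => T c.1 c.2 < n
  isLowerSet := by
    rintro ⟨i, j⟩ ⟨i', j'⟩ hle hc
    obtain ⟨hi, hj⟩ := Prod.mk_le_mk.1 hle
    simp only [coe_filter, Set.mem_ofPred_eq, YoungDiagram.mem_cells] at hc ⊢
    refine ⟨ν.up_left_mem hi hj hc.1, lt_of_le_of_lt ?_ hc.2⟩
    exact (T.col_weak hi (ν.up_left_mem le_rfl hj hc.1)).trans (T.row_weak_of_le hj hc.1)

theorem mem_shapeBelow {T : SemistandardYoungTableau ν} {i j : ℕ} :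
    (i, j) ∈ shapeBelow T n ↔ (i, j) ∈ ν ∧ T i j < n := by
  rw [← YoungDiagram.mem_cells]
  simp [shapeBelow]

/-- The subtableau of the entries less than `n`. -/
def restrictBelow (T : SemistandardYoungTableau ν) (n : ℕ) :
    BoundedTableau n (shapeBelow T n) where
  val :=
    { entry := fun i j => if (i, j) ∈ shapeBelow T n then T i j else 0
      row_weak' := fun hj h => by
        rw [if_pos h, if_pos ((shapeBelow T n).up_left_mem le_rfl hj.le h)]
        exact T.row_weak hj (mem_shapeBelow.1 h).1
      col_strict' := fun hi h => by
        rw [if_pos h, if_pos ((shapeBelow T n).up_left_mem hi.le le_rfl h)]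
        exact T.col_strict hi (mem_shapeBelow.1 h).1
      zeros' := fun h => if_neg h }
  property i j h := (if_pos h).trans_lt (mem_shapeBelow.1 h).2

theorem horizontalStrip_shapeBelow (T : BoundedTableau (n + 1) ν) :
    HorizontalStrip (shapeBelow T.1 n) ν := by
  refine horizontalStrip_iff_mem.2 ⟨fun ⟨i, j⟩ h => (mem_shapeBelow.1 h).1, fun i j h => ?_⟩
  have lt_below := T.1.col_strict i.lt_succ_self h
  have lt_bound := T.2 _ _ h
  exact mem_shapeBelow.2 ⟨ν.up_left_mem i.le_succ le_rfl h, by lia⟩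

theorem restrictBelow_extend (T : BoundedTableau (n + 1) ν) :
    (restrictBelow T.1 n).extend (horizontalStrip_shapeBelow T) = T := by
  refine Subtype.ext (SemistandardYoungTableau.ext fun i j => ?_)
  change (if (i, j) ∈ shapeBelow T.1 n then
    if (i, j) ∈ shapeBelow T.1 n then T.1 i j else 0 else if (i, j) ∈ ν then n else 0) = T.1 i j
  have lt_bound := T.2 i j
  have zeros := T.1.zeros (i := i) (j := j)
  grind [mem_shapeBelow]

theorem shapeBelow_extend (T : BoundedTableau n μ) (h : HorizontalStrip μ ν) :
    shapeBelow (T.extend h).1 n = μ := by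
  ext ⟨i, j⟩
  rw [YoungDiagram.mem_cells, YoungDiagram.mem_cells, mem_shapeBelow, T.extend_apply]
  have lt_bound := T.2 i j
  have sub : (i, j) ∈ μ → (i, j) ∈ ν := fun hc => h.le hc
  grind

theorem BoundedTableau.extend_injective (h : HorizontalStrip μ ν) :
    Function.Injective fun T : BoundedTableau n μ => T.extend h := by
  intro T U hTU
  refine Subtype.ext (SemistandardYoungTableau.ext fun i j => ?_)
  by_cases hc : (i, j) ∈ μ
  · simpa [BoundedTableau.extend_apply, hc] using
      congrArg (fun V : BoundedTableau (n + 1) ν => V.1 i j) hTU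
  · rw [T.1.zeros hc, U.1.zeros hc]

variable (n ν) in
theorem BoundedTableau.extend_bijective :
    Function.Bijective fun p : Σ μ : {μ // HorizontalStrip μ ν}, BoundedTableau n μ.1 =>
      p.2.extend p.1.2 := by
  refine ⟨?_, fun T => ⟨⟨⟨_, horizontalStrip_shapeBelow T⟩, restrictBelow T.1 n⟩,
    restrictBelow_extend T⟩⟩
  rintro ⟨⟨μ, h⟩, T⟩ ⟨⟨μ', h'⟩, T'⟩ hTT'
  obtain rfl : μ = μ' :=
    calc μ = shapeBelow (T.extend h).1 n := (shapeBelow_extend T h).symm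
      _ = shapeBelow (T'.extend h').1 n :=
        congrArg (fun V : BoundedTableau (n + 1) ν => shapeBelow V.1 n) hTT'
      _ = μ' := shapeBelow_extend T' h'
  obtain rfl : T = T' := BoundedTableau.extend_injective h hTT'
  rfl

end BoundedTableaux

section Schur

variable {S : Type*} [CommSemiring S]

/-- The monomial `x ^ T` of a tableau. -/
def tableauWeight (x : ℕ → S) {μ : YoungDiagram} (T : SemistandardYoungTableau μ) : S :=
  ∏ c ∈ μ.cells, x (T c.1 c.2)

theorem tableauWeight_extend (x : ℕ → S) {n : ℕ} {μ ν : YoungDiagram} (T : BoundedTableau n μ)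
    (h : HorizontalStrip μ ν) :
    tableauWeight x (T.extend h).1 = x n ^ (ν.card - μ.card) * tableauWeight x T.1 := by
  have hsub : μ.cells ⊆ ν.cells := YoungDiagram.cells_subset_iff.2 h.le
  rw [tableauWeight, ← prod_sdiff hsub, tableauWeight]
  congr 1
  · rw [YoungDiagram.card, YoungDiagram.card, ← card_sdiff_of_subset hsub]
    refine prod_eq_pow_card fun c hc => ?_
    obtain ⟨hν, hμ⟩ := mem_sdiff.1 hc
    rw [T.extend_apply, if_neg (by simpa using hμ), if_pos (by simpa using hν)]
  · refine prod_congr rfl fun c hc => ?_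
    rw [T.extend_apply, if_pos (by simpa using hc)]

variable [TopologicalSpace S]

/-- The Schur polynomial `s_μ(x 0, …, x (n - 1))`. -/
noncomputable def schurPoly (x : ℕ → S) (n : ℕ) (μ : YoungDiagram) : S :=
  ∑' T : BoundedTableau n μ, tableauWeight x T.1

theorem schurPoly_zero (x : ℕ → S) (μ : YoungDiagram) [Decidable (μ = ⊥)] :
    schurPoly x 0 μ = if μ = ⊥ then 1 else 0 := by
  split_ifs with h
  · subst h
    let _ : Unique (BoundedTableau 0 ⊥) :=
      { default := ⟨SemistandardYoungTableau.highestWeight ⊥, fun i j h =>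
          absurd h (YoungDiagram.notMem_bot _)⟩
        uniq := fun T => Subtype.ext <| SemistandardYoungTableau.ext fun i j => by
          rw [T.1.zeros (YoungDiagram.notMem_bot _),
            SemistandardYoungTableau.zeros _ (YoungDiagram.notMem_bot _)] }
    rw [schurPoly, tsum_fintype, Fintype.sum_unique, tableauWeight, YoungDiagram.cells_bot,
      prod_empty]
  · have : IsEmpty (BoundedTableau 0 μ) := by
      refine ⟨fun T => h (bot_unique fun c hc => ?_)⟩
      exact absurd (T.2 c.1 c.2 hc) (Nat.not_lt_zero _)
    exact tsum_empty

variable [SummableSemiring S]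

theorem schurPoly_succ (x : ℕ → S) (n : ℕ) (ν : YoungDiagram) :
    schurPoly x (n + 1) ν = ∑' μ, skewSchurOne (x n) ν μ * schurPoly x n μ := by
  rw [tsum_skewSchurOne, schurPoly,
    ← (Equiv.ofBijective _ (BoundedTableau.extend_bijective n ν)).tsum_eq,
    SummableSemiring.tsum_sigma]
  simp only [Equiv.ofBijective_apply, tableauWeight_extend, SummableSemiring.tsum_mul_left,
    schurPoly]

theorem tsum_skewSchurOne_mul_schurPoly (x : ℕ → S) (n : ℕ) (y : S) (μ : YoungDiagram) :
    ∑' ρ, skewSchurOne y ρ μ * schurPoly x n ρ =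
      (∏ i ∈ range n, ∑' k : ℕ, (x i * y) ^ k) * schurPoly x n μ := by
  induction n generalizing μ with
  | zero =>
    classical
    simp only [schurPoly_zero, mul_ite, mul_one, mul_zero, tsum_ite_eq, skewSchurOne_bot,
      range_zero, prod_empty]
  | succ n ih =>
    calc ∑' ρ, skewSchurOne y ρ μ * schurPoly x (n + 1) ρ
        = ∑' ν, (∑' ρ, skewSchurOne y ρ μ * skewSchurOne (x n) ρ ν) * schurPoly x n ν := by
          simp only [schurPoly_succ, ← SummableSemiring.tsum_mul_left,
            ← SummableSemiring.tsum_mul_right, mul_assoc]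
          exact SummableSemiring.tsum_comm _
      _ = (∑' k : ℕ, (x n * y) ^ k) *
            ∑' κ, skewSchurOne (x n) μ κ * ∑' ν, skewSchurOne y ν κ * schurPoly x n ν := by
          simp only [tsum_skewSchurOne_mul_skewSchurOne, mul_comm y (x n), mul_assoc,
            SummableSemiring.tsum_mul_left]
          congr 1
          simp only [← SummableSemiring.tsum_mul_left, ← SummableSemiring.tsum_mul_right, mul_assoc]
          exact SummableSemiring.tsum_comm _
      _ = (∏ i ∈ range (n + 1), ∑' k : ℕ, (x i * y) ^ k) * schurPoly x (n + 1) μ := by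
          simp only [ih, mul_left_comm _ (∏ _ ∈ range n, _), SummableSemiring.tsum_mul_left,
            ← schurPoly_succ, prod_range_succ]
          rw [mul_assoc, mul_left_comm]

end Schur

/-! ### Littlewood's identity -/

/-- The pairs `i < j < n`. -/
def ltPairs (n : ℕ) : Finset (ℕ × ℕ) :=
  (range n ×ˢ range n).filter fun p => p.1 < p.2

theorem mem_ltPairs {n : ℕ} {p : ℕ × ℕ} : p ∈ ltPairs n ↔ p.1 < p.2 ∧ p.2 < n := by
  simp only [ltPairs, mem_filter, mem_product, mem_range]
  lia

theorem prod_ltPairs {S : Type*} [CommMonoid S] (f : ℕ × ℕ → S) (n : ℕ) :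
    ∏ p ∈ ltPairs n, f p = ∏ j ∈ range n, ∏ i ∈ range j, f (i, j) :=
  prod_finset_product_right _ _ _ fun p => by rw [mem_ltPairs, mem_range, mem_range, and_comm]

-- Over a semiring such as `ℕ∞` the geometric series stands in for `(1 - x i * x j)⁻¹`.
theorem tsum_hasEvenColumns_schurPoly {S : Type*} [CommSemiring S] [TopologicalSpace S]
    [SummableSemiring S] (x : ℕ → S) (n : ℕ) :
    ∑' μ : {μ // HasEvenColumns μ}, schurPoly x n μ =
      ∏ p ∈ ltPairs n, ∑' k : ℕ, (x p.1 * x p.2) ^ k := by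
  rw [prod_ltPairs]
  induction n with
  | zero =>
    classical
    rw [tsum_eq_single ⟨⊥, hasEvenColumns_bot⟩ fun μ hμ => ?_]
    · rw [schurPoly_zero, if_pos rfl, range_zero, prod_empty]
    · rw [schurPoly_zero, if_neg fun h => hμ (Subtype.ext h)]
  | succ n ih =>
    calc ∑' ν : {ν // HasEvenColumns ν}, schurPoly x (n + 1) ν
        = ∑' μ, (∑' ν : {ν // HasEvenColumns ν}, skewSchurOne (x n) ν μ) * schurPoly x n μ := by
          simp only [schurPoly_succ, ← SummableSemiring.tsum_mul_right]
          exact SummableSemiring.tsum_comm _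
      _ = ∑' ν : {ν // HasEvenColumns ν}, ∑' μ, skewSchurOne (x n) μ ν * schurPoly x n μ := by
          simp only [tsum_hasEvenColumns_skewSchurOne, ← SummableSemiring.tsum_mul_right]
          exact SummableSemiring.tsum_comm _
      _ = (∏ i ∈ range n, ∑' k : ℕ, (x i * x n) ^ k) *
            ∑' ν : {ν // HasEvenColumns ν}, schurPoly x n ν := by
          simp only [tsum_skewSchurOne_mul_schurPoly, SummableSemiring.tsum_mul_left]
      _ = ∏ j ∈ range (n + 1), ∏ i ∈ range j, ∑' k : ℕ, (x i * x j) ^ k := by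
          rw [ih, prod_range_succ, mul_comm]

section Coefficients

/-- The exponent vector of the monomial `x ^ T`. -/
noncomputable def tableauContent {μ : YoungDiagram} (T : SemistandardYoungTableau μ) : ℕ →₀ ℕ :=
  ∑ c ∈ μ.cells, Finsupp.single (T c.1 c.2) 1

theorem tableauContent_apply {μ : YoungDiagram} (T : SemistandardYoungTableau μ) (k : ℕ) :
    tableauContent T k = #{c ∈ μ.cells | T c.1 c.2 = k} := by
  simp [tableauContent, Finsupp.finsetSum_apply, Finsupp.single_apply]

theorem tableauContent_eq_iff {μ : YoungDiagram} {T : SemistandardYoungTableau μ} {d : ℕ →₀ ℕ} :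
    tableauContent T = d ↔ ∀ k, d k = #{c ∈ μ.cells | T c.1 c.2 = k} := by
  simp only [eq_comm (a := tableauContent T), Finsupp.ext_iff, tableauContent_apply]

theorem mem_support_tableauContent {μ : YoungDiagram} (T : SemistandardYoungTableau μ) {i j : ℕ}
    (h : (i, j) ∈ μ) : T i j ∈ (tableauContent T).support := by
  rw [Finsupp.mem_support_iff, tableauContent_apply]
  exact (card_pos.2 ⟨(i, j), by simpa using h⟩).ne'

theorem tableauWeight_X {μ : YoungDiagram} (T : SemistandardYoungTableau μ) :
    tableauWeight (X : ℕ → MvPowerSeries ℕ ℕ∞) T = monomial (tableauContent T) 1 := by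
  simp only [tableauWeight, X_def, prod_monomial, prod_const_one, tableauContent]

/-- The vertex degrees of the multigraph with edge multiplicities `c`: the exponent vector of the
monomial `∏ (x i * x j) ^ c (i, j)`. -/
noncomputable def vertexDegree (c : ℕ × ℕ →₀ ℕ) : ℕ →₀ ℕ :=
  c.sum fun p k => k • (Finsupp.single p.1 1 + Finsupp.single p.2 1)

theorem vertexDegree_apply (c : ℕ × ℕ →₀ ℕ) (k : ℕ) :
    vertexDegree c k = ∑ p ∈ c.support,
      c p * ((if p.1 = k then 1 else 0) + (if p.2 = k then 1 else 0)) := by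
  simp only [vertexDegree, Finsupp.sum, Finsupp.finsetSum_apply, Finsupp.smul_apply,
    Finsupp.add_apply, Finsupp.single_apply, smul_eq_mul]

theorem vertexDegree_eq_iff {c : ℕ × ℕ →₀ ℕ} {d : ℕ →₀ ℕ} :
    vertexDegree c = d ↔ ∀ k, d k = ∑ p ∈ c.support,
      c p * ((if p.1 = k then 1 else 0) + (if p.2 = k then 1 else 0)) := by
  simp only [eq_comm (a := vertexDegree c), Finsupp.ext_iff, vertexDegree_apply]

theorem snd_mem_support_vertexDegree {c : ℕ × ℕ →₀ ℕ} {p : ℕ × ℕ} (hp : p ∈ c.support) :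
    p.2 ∈ (vertexDegree c).support := by
  rw [Finsupp.mem_support_iff, vertexDegree_apply]
  refine (sum_pos' (fun _ _ => Nat.zero_le _) ⟨p, hp, ?_⟩).ne'
  have := Nat.pos_of_ne_zero (Finsupp.mem_support_iff.1 hp)
  rw [if_pos rfl]
  positivity

theorem prod_X_mul_X_pow (c : ℕ × ℕ →₀ ℕ) :
    (c.prod fun p k => (X p.1 * X p.2 : MvPowerSeries ℕ ℕ∞) ^ k) =
      monomial (vertexDegree c) 1 := by
  simp only [Finsupp.prod, X_def, monomial_mul_monomial, monomial_pow, prod_monomial, one_pow,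
    mul_one, prod_const_one, vertexDegree, Finsupp.sum]

variable (d : ℕ →₀ ℕ) (n : ℕ)

theorem coeff_tsum_schurPoly_X :
    coeff d (∑' μ : {μ // HasEvenColumns μ}, schurPoly (X : ℕ → MvPowerSeries ℕ ℕ∞) n μ) =
      ENat.card {p : Σ μ : {μ // HasEvenColumns μ}, BoundedTableau n μ.1 //
        tableauContent p.2.1 = d} := by
  rw [← coeff_tsum_monomial fun p : Σ μ : {μ // HasEvenColumns μ}, BoundedTableau n μ.1 =>
    tableauContent p.2.1, SummableSemiring.tsum_sigma]
  simp only [schurPoly, tableauWeight_X]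

theorem coeff_prod_geometric_X :
    coeff d (∏ p ∈ ltPairs n, ∑' k : ℕ, (X p.1 * X p.2 : MvPowerSeries ℕ ℕ∞) ^ k) =
      ENat.card {c : {c : ℕ × ℕ →₀ ℕ // (c.support : Set (ℕ × ℕ)) ⊆ ltPairs n} //
        vertexDegree c.1 = d} := by
  simp only [SummableSemiring.prod_tsum_pow, prod_X_mul_X_pow, coeff_tsum_monomial]

variable {d n} (hn : d.support ⊆ range n)

/-- Tableaux of content `d` have entries in the support of `d`. -/
def boundedTableauEquiv :
    {p : Σ lam : YoungDiagram, SemistandardYoungTableau lam //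
        HasEvenColumns p.1 ∧ ∀ k, d k = #{c ∈ p.1.cells | p.2 c.1 c.2 = k}} ≃
      {p : Σ μ : {μ // HasEvenColumns μ}, BoundedTableau n μ.1 // tableauContent p.2.1 = d} where
  toFun p := ⟨⟨⟨p.1.1, p.2.1⟩, p.1.2, fun _ _ h => mem_range.1 <| hn <| by
    simpa only [tableauContent_eq_iff.2 p.2.2] using mem_support_tableauContent p.1.2 h⟩,
    tableauContent_eq_iff.2 p.2.2⟩
  invFun p := ⟨⟨p.1.1.1, p.1.2.1⟩, p.1.1.2, tableauContent_eq_iff.1 p.2⟩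

/-- Multigraphs with vertex degrees `d` have their vertices in the support of `d`. -/
def boundedMultigraphEquiv :
    {c : {c : ℕ × ℕ →₀ ℕ // (c.support : Set (ℕ × ℕ)) ⊆ ltPairs n} // vertexDegree c.1 = d} ≃
      {c : (ℕ × ℕ) →₀ ℕ // (∀ p ∈ c.support, p.1 < p.2) ∧
        ∀ k, d k = ∑ p ∈ c.support,
          c p * ((if p.1 = k then 1 else 0) + (if p.2 = k then 1 else 0))} where
  toFun c := ⟨c.1.1, fun _ hp => (mem_ltPairs.1 (c.1.2 hp)).1, vertexDegree_eq_iff.1 c.2⟩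
  invFun c := ⟨⟨c.1, fun _ hp => mem_ltPairs.2 ⟨c.2.1 _ hp, mem_range.1 <| hn <| by
    simpa only [vertexDegree_eq_iff.2 c.2.2] using snd_mem_support_vertexDegree hp⟩⟩,
    vertexDegree_eq_iff.2 c.2.2⟩

end Coefficients

/-- Littlewood's identity `Σ_{λ' even} s_λ(x) = Π_{i<j} (1 − x_i x_j)^{−1}` in infinitely
many variables `x_0, x_1, …`, stated coefficient-wise: for each monomial exponent
`d : ℕ →₀ ℕ`, the number of pairs `(λ, T)` of a Young diagram `λ` all of whose column
lengths are even together with a semistandard Young tableau `T` of shape `λ` whose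
content is `d` (this counts the coefficient of `x^d` in `Σ_{λ' even} s_λ`, by the
combinatorial definition of the Schur function) equals the number of finitely supported
multiplicity functions `c` on pairs `i < j` with `Σ c(i,j)·(e_i + e_j) = d` (the
coefficient of `x^d` in `Π_{i<j} (1 − x_i x_j)^{−1}`). -/
theorem littlewood_identity (d : ℕ →₀ ℕ) :
    Nat.card {p : Σ lam : YoungDiagram, SemistandardYoungTableau lam //
        (∀ j, Even (p.1.colLen j)) ∧
        ∀ k, d k = (p.1.cells.filter (fun c => p.2 c.1 c.2 = k)).card}
      = Nat.card {c : (ℕ × ℕ) →₀ ℕ //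
        (∀ p ∈ c.support, p.1 < p.2) ∧
        ∀ k, d k = ∑ p ∈ c.support,
          c p * ((if p.1 = k then 1 else 0) + (if p.2 = k then 1 else 0))} := by
  have hn := d.support.subset_range_sup_succ
  set n := d.support.sup id + 1
  calc _ = Nat.card {p : Σ μ : {μ // HasEvenColumns μ}, BoundedTableau n μ.1 //
          tableauContent p.2.1 = d} :=
        Nat.card_congr (boundedTableauEquiv hn)
    _ = (coeff d (∑' μ : {μ // HasEvenColumns μ},
          schurPoly (X : ℕ → MvPowerSeries ℕ ℕ∞) n μ)).toNat := by
        rw [coeff_tsum_schurPoly_X]; rfl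
    _ = (coeff d (∏ p ∈ ltPairs n,
          ∑' k : ℕ, (X p.1 * X p.2 : MvPowerSeries ℕ ℕ∞) ^ k)).toNat := by
        rw [tsum_hasEvenColumns_schurPoly]
    _ = Nat.card {c : {c : ℕ × ℕ →₀ ℕ // (c.support : Set (ℕ × ℕ)) ⊆ ltPairs n} //
          vertexDegree c.1 = d} := by
        rw [coeff_prod_geometric_X]; rfl
    _ = _ := Nat.card_congr (boundedMultigraphEquiv hn)
end
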